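/- arXiv:2302.03010 — 4 statements merged into one kernel-verified Lean document; each statement's English description precedes it below -/
import Mathlib

section
/- Let μ₁ and ν₁ be σ-finite measures on a measurable space S. If the Poisson point processes PPP(μ₁) and PPP(ν₁) have the same law, then μ₁ = ν₁. More generally, if μ and ν are random measures on a Polish space S and PPP(μ) has the same law as PPP(ν) (as Cox processes), then μ and ν have the same law. -/
open MeasureTheory

/-- `e^{-x}` for `x : ℝ≥0∞`, with `e^{-∞} = 0`. -/
noncomputable def expNeg (x : ENNReal) : ENNReal :=
  if x = ⊤ then 0 else ENNReal.ofReal (Real.exp (-x.toReal))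

/-- `η` is a Cox process (Poisson point process with random intensity) directed by the random
measure `μ`, characterized by its Laplace functional:
`E[exp(-⟨η, f⟩)] = E[exp(-∫ (1 - e^{-f}) dμ)]` for all measurable `f ≥ 0`. -/
def IsCoxProcess {Ω S : Type*} [MeasurableSpace Ω] [MeasurableSpace S]
    (P : Measure Ω) (η μ : Ω → Measure S) : Prop :=
  ∀ f : S → ENNReal, Measurable f →
    ∫⁻ ω, expNeg (∫⁻ x, f x ∂(η ω)) ∂P
      = ∫⁻ ω, expNeg (∫⁻ x, (1 - expNeg (f x)) ∂(μ ω)) ∂P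

section CoxHelpers

lemma expNeg_top : expNeg ⊤ = 0 := by simp [expNeg]

lemma expNeg_of_ne_top {x : ENNReal} (hx : x ≠ ⊤) :
    expNeg x = ENNReal.ofReal (Real.exp (-x.toReal)) := by simp [expNeg, hx]

lemma expNeg_zero : expNeg 0 = 1 := by simp [expNeg]

lemma expNeg_le_one (x : ENNReal) : expNeg x ≤ 1 := by
  unfold expNeg
  split_ifs
  · simp
  · simp

lemma expNeg_ne_top (x : ENNReal) : expNeg x ≠ ⊤ :=
  ne_top_of_le_ne_top ENNReal.one_ne_top (expNeg_le_one x)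

lemma expNeg_add (x y : ENNReal) : expNeg (x + y) = expNeg x * expNeg y := by
  by_cases hx : x = ⊤
  · simp [hx, expNeg_top]
  by_cases hy : y = ⊤
  · simp [hy, expNeg_top]
  rw [expNeg_of_ne_top hx, expNeg_of_ne_top hy, expNeg_of_ne_top (by simp [hx, hy]),
    ← ENNReal.ofReal_mul (Real.exp_pos _).le, ← Real.exp_add, ENNReal.toReal_add hx hy]
  congr 2
  ring

lemma expNeg_natCast_mul (n : ℕ) (x : ENNReal) : expNeg (n * x) = expNeg x ^ n := by
  induction n with
  | zero => simp [expNeg_zero]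
  | succ n ih => rw [Nat.cast_succ, add_mul, one_mul, expNeg_add, ih, pow_succ]

lemma expNeg_sum {ι : Type*} (s : Finset ι) (f : ι → ENNReal) :
    expNeg (∑ i ∈ s, f i) = ∏ i ∈ s, expNeg (f i) := by
  classical
  induction s using Finset.induction_on with
  | empty => simp [expNeg_zero]
  | insert a s ha ih => rw [Finset.sum_insert ha, Finset.prod_insert ha, expNeg_add, ih]

lemma measurable_expNeg : Measurable expNeg := by
  unfold expNeg
  refine Measurable.ite (measurableSet_singleton _) measurable_const ?_
  fun_prop

lemma expNeg_injective : Function.Injective expNeg := by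
  intro x y h
  by_cases hx : x = ⊤
  · by_cases hy : y = ⊤
    · rw [hx, hy]
    · rw [hx, expNeg_top, expNeg_of_ne_top hy] at h
      exact absurd h.symm (by simp [Real.exp_pos])
  · by_cases hy : y = ⊤
    · rw [hy, expNeg_top, expNeg_of_ne_top hx] at h
      exact absurd h (by simp [Real.exp_pos])
    · rw [expNeg_of_ne_top hx, expNeg_of_ne_top hy,
        ENNReal.ofReal_eq_ofReal_iff (Real.exp_pos _).le (Real.exp_pos _).le] at h
      have := Real.exp_injective h
      exact (ENNReal.toReal_eq_toReal_iff' hx hy).1 (by linarith)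

/-- `e^{-x}` as an element of the unit interval. -/
noncomputable def expNegI (x : ENNReal) : unitInterval :=
  ⟨(expNeg x).toReal, ENNReal.toReal_nonneg, by
    simpa using ENNReal.toReal_mono ENNReal.one_ne_top (expNeg_le_one x)⟩

lemma measurable_expNegI : Measurable expNegI :=
  (measurable_expNeg.ennreal_toReal).subtype_mk

lemma expNegI_injective : Function.Injective expNegI := by
  intro x y h
  have h' : (expNeg x).toReal = (expNeg y).toReal := congrArg (fun z : unitInterval => (z : ℝ)) h
  exact expNeg_injective ((ENNReal.toReal_eq_toReal_iff' (expNeg_ne_top _) (expNeg_ne_top _)).1 h')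

/-- inverse of `f ↦ 1 - e^{-f}` -/
lemma exists_one_sub_expNeg {S : Type*} [MeasurableSpace S] (g : S → ENNReal) (hg : Measurable g)
    (h1 : ∀ x, g x < 1) : ∃ f : S → ENNReal, Measurable f ∧ ∀ x, 1 - expNeg (f x) = g x := by
  refine ⟨fun x => ENNReal.ofReal (-Real.log (1 - (g x).toReal)), by fun_prop, fun x => ?_⟩
  have hfin : g x ≠ ⊤ := (h1 x).ne_top
  have hlt : (g x).toReal < 1 := by
    simpa using (ENNReal.toReal_lt_toReal hfin ENNReal.one_ne_top).2 (h1 x)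
  have h0 : 0 ≤ (g x).toReal := ENNReal.toReal_nonneg
  have hlog : 0 ≤ -Real.log (1 - (g x).toReal) := by
    have := Real.log_nonpos (x := 1 - (g x).toReal) (by linarith) (by linarith)
    linarith
  rw [expNeg_of_ne_top ENNReal.ofReal_ne_top, ENNReal.toReal_ofReal hlog, neg_neg,
    Real.exp_log (by linarith), ← ENNReal.ofReal_one,
    ← ENNReal.ofReal_sub _ (by linarith)]
  simp [hfin]

lemma lintegral_expNeg_eq_mgf {Ω : Type*} [MeasurableSpace Ω] (P : Measure Ω)
    [IsProbabilityMeasure P] (Z : Ω → ENNReal) (hZ : Measurable Z) {t : ℝ} (ht : 0 < t) :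
    ∫⁻ ω, expNeg (ENNReal.ofReal t * Z ω) ∂P
      = ENNReal.ofReal
        (ProbabilityTheory.mgf (fun ω => (Z ω).toReal) (P.restrict {ω | Z ω ≠ ⊤}) (-t)) := by
  have hm : MeasurableSet {ω | Z ω ≠ ⊤} := hZ (measurableSet_singleton ⊤).compl
  have hae : ∀ᵐ ω ∂(P.restrict {ω | Z ω ≠ ⊤}), ‖Real.exp (-t * (Z ω).toReal)‖ ≤ 1 := by
    refine Filter.Eventually.of_forall fun ω => ?_
    rw [Real.norm_of_nonneg (Real.exp_pos _).le, Real.exp_le_one_iff]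
    have : 0 ≤ (Z ω).toReal := ENNReal.toReal_nonneg
    nlinarith
  rw [ProbabilityTheory.mgf, ofReal_integral_eq_lintegral_ofReal]
  · rw [← lintegral_indicator hm]
    refine lintegral_congr fun ω => ?_
    by_cases h : Z ω = ⊤
    · have : ENNReal.ofReal t ≠ 0 := by simpa using ht
      rw [h, ENNReal.mul_top this, expNeg_top, Set.indicator_of_notMem (by simpa using h)]
    · rw [Set.indicator_of_mem (by simpa using h),
        expNeg_of_ne_top (ENNReal.mul_ne_top ENNReal.ofReal_ne_top h), ENNReal.toReal_mul,
        ENNReal.toReal_ofReal ht.le, neg_mul]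
  · exact Integrable.of_bound (Measurable.aestronglyMeasurable (by fun_prop)) 1 hae
  · exact Filter.Eventually.of_forall fun ω => (Real.exp_pos _).le

lemma Iio_subset_interior {Ω : Type*} [MeasurableSpace Ω] (P : Measure Ω)
    [IsFiniteMeasure P] (Z : Ω → ENNReal) (hZ : Measurable Z) :
    Set.Iio 0 ⊆ interior (ProbabilityTheory.integrableExpSet (fun ω => (Z ω).toReal) P) := by
  refine interior_maximal (fun t ht => ?_) isOpen_Iio
  refine Integrable.of_bound (Measurable.aestronglyMeasurable (by fun_prop)) 1 (Filter.Eventually.of_forall fun ω => ?_)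
  rw [Real.norm_of_nonneg (Real.exp_pos _).le, Real.exp_le_one_iff]
  have : 0 ≤ (Z ω).toReal := ENNReal.toReal_nonneg
  have ht' : t < 0 := ht
  nlinarith

lemma laplace_extend {Ω₁ Ω₂ : Type*} [MeasurableSpace Ω₁] [MeasurableSpace Ω₂]
    (P₁ : Measure Ω₁) (P₂ : Measure Ω₂) [IsProbabilityMeasure P₁] [IsProbabilityMeasure P₂]
    (Z₁ : Ω₁ → ENNReal) (Z₂ : Ω₂ → ENNReal) (hZ₁ : Measurable Z₁) (hZ₂ : Measurable Z₂)
    (ε : ℝ) (hε : 0 < ε)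
    (h : ∀ t : ℝ, 0 < t → t < ε → ∫⁻ ω, expNeg (ENNReal.ofReal t * Z₁ ω) ∂P₁
      = ∫⁻ ω, expNeg (ENNReal.ofReal t * Z₂ ω) ∂P₂) :
    ∫⁻ ω, expNeg (Z₁ ω) ∂P₁ = ∫⁻ ω, expNeg (Z₂ ω) ∂P₂ := by
  have key : Set.EqOn
      (ProbabilityTheory.mgf (fun ω => (Z₁ ω).toReal) (P₁.restrict {ω | Z₁ ω ≠ ⊤}))
      (ProbabilityTheory.mgf (fun ω => (Z₂ ω).toReal) (P₂.restrict {ω | Z₂ ω ≠ ⊤}))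
      (Set.Iio 0) := by
    refine AnalyticOnNhd.eqOn_of_preconnected_of_eventuallyEq
      (ProbabilityTheory.analyticOnNhd_mgf.mono (Iio_subset_interior _ _ hZ₁))
      (ProbabilityTheory.analyticOnNhd_mgf.mono (Iio_subset_interior _ _ hZ₂))
      isPreconnected_Iio (z₀ := -(ε / 2)) (by simpa using hε) ?_
    filter_upwards [Ioo_mem_nhds (show -ε < -(ε / 2) by linarith)
      (show -(ε / 2) < 0 by linarith)] with t ht
    have := h (-t) (by linarith [ht.2]) (by linarith [ht.1])
    rw [lintegral_expNeg_eq_mgf P₁ Z₁ hZ₁ (by linarith [ht.2]),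
      lintegral_expNeg_eq_mgf P₂ Z₂ hZ₂ (by linarith [ht.2]), neg_neg,
      ENNReal.ofReal_eq_ofReal_iff ProbabilityTheory.mgf_nonneg ProbabilityTheory.mgf_nonneg]
      at this
    exact this
  have h1 := lintegral_expNeg_eq_mgf P₁ Z₁ hZ₁ one_pos
  have h2 := lintegral_expNeg_eq_mgf P₂ Z₂ hZ₂ one_pos
  rw [key (by simp : (-1 : ℝ) ∈ Set.Iio 0), ← h2] at h1
  simpa using h1

/-- Finite measures on a finite-dimensional cube are determined by their moments. -/
lemma cube_ext {ι : Type*} [Fintype ι] (P Q : Measure (ι → unitInterval))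
    [IsFiniteMeasure P] [IsFiniteMeasure Q]
    (h : ∀ k : ι → ℕ, ∫ x, ∏ i, (x i : ℝ) ^ k i ∂P = ∫ x, ∏ i, (x i : ℝ) ^ k i ∂Q) :
    P = Q := by
  classical
  let X : ι → BoundedContinuousFunction (ι → unitInterval) ℝ := fun i =>
    BoundedContinuousFunction.mkOfCompact ⟨fun x => (x i : ℝ), by fun_prop⟩
  let A : StarSubalgebra ℝ (BoundedContinuousFunction (ι → unitInterval) ℝ) :=
    { (MvPolynomial.aeval (R := ℝ) X).range with
      star_mem' := by
        intro a ha
        have : star a = a := by ext x; simp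
        rwa [this] }
  refine ext_of_forall_mem_subalgebra_integral_eq_of_polish (𝕜 := ℝ) (A := A) ?_ ?_
  · intro x y hxy
    obtain ⟨i, hi⟩ := Function.ne_iff.1 hxy
    refine ⟨fun x => (x i : ℝ), ⟨⟨fun x => (x i : ℝ), by fun_prop⟩, ?_, rfl⟩, ?_⟩
    · refine ⟨X i, ⟨MvPolynomial.X i, by simp⟩, rfl⟩
    · exact fun h => hi (Subtype.ext h)
  · rintro g ⟨p, rfl⟩
    have hint : ∀ (R : Measure (ι → unitInterval)) [IsFiniteMeasure R]
      (g : BoundedContinuousFunction (ι → unitInterval) ℝ), Integrable g R :=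
      fun R _ g => g.integrable R
    change ∫ x, (MvPolynomial.aeval X p) x ∂P = ∫ x, (MvPolynomial.aeval X p) x ∂Q
    induction p using MvPolynomial.induction_on' with
    | monomial u a =>
      have : ∀ x, (MvPolynomial.aeval X (MvPolynomial.monomial u a)) x
          = a * ∏ i, (x i : ℝ) ^ u i := by
        intro x
        rw [MvPolynomial.aeval_monomial, Finsupp.prod_fintype _ _ (by simp)]
        have hp : ∀ s : Finset ι, (∏ i ∈ s, X i ^ u i) x = ∏ i ∈ s, (x i : ℝ) ^ u i := by
          intro s
          induction s using Finset.induction_on with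
          | empty => simp
          | insert a s ha ih =>
            rw [Finset.prod_insert ha, Finset.prod_insert ha, BoundedContinuousFunction.mul_apply,
              ih, BoundedContinuousFunction.pow_apply]
            rfl
        rw [BoundedContinuousFunction.mul_apply, hp]
        rfl
      simp_rw [this, integral_const_mul, h]
    | add p q hp hq =>
      simp only [map_add, BoundedContinuousFunction.add_apply]
      rw [integral_add (hint P _) (hint P _), integral_add (hint Q _) (hint Q _), hp, hq]

end CoxHelpers

/-- All evaluations of a measure, mapped into the unit interval. -/
noncomputable def evalI {S : Type*} [MeasurableSpace S] (m : Measure S) :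
    {s : Set S // MeasurableSet s} → unitInterval := fun s => expNegI (m s.1)

lemma measurableSpace_measure_eq {S : Type*} [MeasurableSpace S] :
    (Measure.instMeasurableSpace : MeasurableSpace (Measure S))
      = MeasurableSpace.comap evalI MeasurableSpace.pi := by
  have hemb : MeasurableEmbedding expNegI :=
    measurable_expNegI.measurableEmbedding expNegI_injective
  apply le_antisymm
  · refine iSup_le fun s => iSup_le fun hs => ?_
    rw [MeasurableSpace.pi, MeasurableSpace.comap_iSup]
    refine le_iSup_of_le ⟨s, hs⟩ ?_
    rw [MeasurableSpace.comap_comp]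
    have : (borel ENNReal) = MeasurableSpace.comap expNegI inferInstance := by
      rw [hemb.comap_eq]; exact (BorelSpace.measurable_eq (α := ENNReal)).symm
    rw [this, MeasurableSpace.comap_comp]
    exact le_rfl
  · rw [← measurable_iff_comap_le]
    exact measurable_pi_lambda _ fun s => measurable_expNegI.comp (Measure.measurable_coe s.2)

lemma measurable_evalI {S : Type*} [MeasurableSpace S] :
    Measurable (evalI : Measure S → _) :=
  measurable_pi_lambda _ fun s => measurable_expNegI.comp (Measure.measurable_coe s.2)

lemma cox_laplace {Ω S : Type*} [MeasurableSpace Ω] [MeasurableSpace S] {P : Measure Ω}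
    {η μ : Ω → Measure S} (hη : Measurable η) (h : IsCoxProcess P η μ)
    {f : S → ENNReal} (hf : Measurable f) :
    ∫⁻ ω, expNeg (∫⁻ x, (1 - expNeg (f x)) ∂(μ ω)) ∂P
      = ∫⁻ m, expNeg (∫⁻ x, f x ∂m) ∂(Measure.map η P) := by
  rw [← h f hf]
  exact (lintegral_map (measurable_expNeg.comp (Measure.measurable_lintegral hf)) hη).symm

lemma moment_eq {Ω S : Type*} [MeasurableSpace Ω] [MeasurableSpace S] (P : Measure Ω)
    (ρ : Ω → Measure S) (hρ : Measurable ρ)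
    (I : Finset {s : Set S // MeasurableSet s}) (k : I → ℕ) :
    ∫ x, ∏ i, (x i : ℝ) ^ k i ∂((P.map fun ω => evalI (ρ ω)).map I.restrict)
      = (∫⁻ ω, expNeg (∑ i, (k i : ENNReal) * ρ ω i.1.1) ∂P).toReal := by
  have hm : Measurable fun ω => evalI (ρ ω) := measurable_evalI.comp hρ
  rw [Measure.map_map (Finset.measurable_restrict I) hm, integral_map
    ((Finset.measurable_restrict I).comp hm).aemeasurable
    (Continuous.aestronglyMeasurable (by fun_prop))]
  have hmeas : Measurable fun ω => ∑ i : I, (k i : ENNReal) * ρ ω i.1.1 :=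
    Finset.measurable_sum _ fun i _ => ((Measure.measurable_coe i.1.2).comp hρ).const_mul _
  have hmeas2 : Measurable fun ω => expNeg (∑ i : I, (k i : ENNReal) * ρ ω i.1.1) :=
    measurable_expNeg.comp hmeas
  rw [← integral_toReal hmeas2.aemeasurable
    (Filter.Eventually.of_forall fun ω => (expNeg_ne_top _).lt_top)]
  refine integral_congr_ae (Filter.Eventually.of_forall fun ω => ?_)
  simp only [expNeg_sum, expNeg_natCast_mul, ENNReal.toReal_prod, ENNReal.toReal_pow]
  rfl

/-- If the Cox processes `PPP(μ)` and `PPP(ν)` directed by random measures `μ, ν` on a Polish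
space have the same law, then `μ` and `ν` have the same law.  (In particular, for deterministic
σ-finite intensities, equality in law of the Poisson point processes forces equality of the
intensity measures.) -/
theorem law_eq_of_cox_law_eq {Ω₁ Ω₂ S : Type*} [MeasurableSpace Ω₁] [MeasurableSpace Ω₂]
    [MeasurableSpace S] [TopologicalSpace S] [PolishSpace S] [BorelSpace S]
    (P₁ : Measure Ω₁) (P₂ : Measure Ω₂) [IsProbabilityMeasure P₁] [IsProbabilityMeasure P₂]
    (η₁ μ : Ω₁ → Measure S) (η₂ ν : Ω₂ → Measure S)
    (hη₁ : Measurable η₁) (hη₂ : Measurable η₂) (hμ : Measurable μ) (hν : Measurable ν)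
    (h₁ : IsCoxProcess P₁ η₁ μ) (h₂ : IsCoxProcess P₂ η₂ ν)
    (hlaw : Measure.map η₁ P₁ = Measure.map η₂ P₂) :
    Measure.map μ P₁ = Measure.map ν P₂ := by
  -- Laplace functionals agree on all bounded functions
  have hlap : ∀ (g : S → ENNReal) (N : ℕ), Measurable g → (∀ x, g x ≤ N) →
      ∫⁻ ω, expNeg (∫⁻ x, g x ∂(μ ω)) ∂P₁ = ∫⁻ ω, expNeg (∫⁻ x, g x ∂(ν ω)) ∂P₂ := by
    intro g N hg hN
    refine laplace_extend P₁ P₂ _ _ ((Measure.measurable_lintegral hg).comp hμ)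
      ((Measure.measurable_lintegral hg).comp hν) (1 / (N + 1)) (by positivity) ?_
    intro t ht0 ht
    obtain ⟨f, hf, hfg⟩ := exists_one_sub_expNeg (fun x => ENNReal.ofReal t * g x)
      (hg.const_mul _) (fun x => by
        calc ENNReal.ofReal t * g x ≤ ENNReal.ofReal t * N := by gcongr; exact hN x
          _ = ENNReal.ofReal (t * N) := by
            rw [ENNReal.ofReal_mul ht0.le, ENNReal.ofReal_natCast]
          _ < 1 := by
            rw [ENNReal.ofReal_lt_one]
            rw [lt_div_iff₀ (by positivity)] at ht
            nlinarith)
    have e1 := cox_laplace hη₁ h₁ hf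
    have e2 := cox_laplace hη₂ h₂ hf
    rw [hlaw, ← e2] at e1
    simp_rw [hfg, lintegral_const_mul _ hg] at e1
    exact e1
  -- the moments
  have hmom : ∀ (I : Finset {s : Set S // MeasurableSet s}) (k : I → ℕ),
      ∫⁻ ω, expNeg (∑ i, (k i : ENNReal) * μ ω i.1.1) ∂P₁
        = ∫⁻ ω, expNeg (∑ i, (k i : ENNReal) * ν ω i.1.1) ∂P₂ := by
    intro I k
    have hmeas : ∀ i : I, Measurable ((i.1.1).indicator (fun _ : S => (1 : ENNReal))) :=
      fun i => measurable_const.indicator i.1.2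
    have := hlap (fun x => ∑ i, (k i : ENNReal) * (i.1.1).indicator (fun _ => 1) x) (∑ i, k i)
      (Finset.measurable_sum _ fun i _ => (hmeas i).const_mul _)
      (fun x => by
        push_cast
        refine Finset.sum_le_sum fun i _ => ?_
        refine mul_le_of_le_one_right' ?_
        exact Set.indicator_le_self' (by simp) x)
    have hint : ∀ m : Measure S,
        ∫⁻ x, ∑ i, (k i : ENNReal) * (i.1.1).indicator (fun _ => 1) x ∂m
          = ∑ i, (k i : ENNReal) * m i.1.1 := by
      intro m
      rw [lintegral_finsetSum _ fun i _ => (hmeas i).const_mul _]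
      refine Finset.sum_congr rfl fun i _ => ?_
      rw [lintegral_const_mul _ (hmeas i), lintegral_indicator i.1.2]
      simp
    simpa only [hint] using this
  have hm1 : Measurable fun ω => evalI (μ ω) := measurable_evalI.comp hμ
  have hm2 : Measurable fun ω => evalI (ν ω) := measurable_evalI.comp hν
  have hpi : P₁.map (fun ω => evalI (μ ω)) = P₂.map (fun ω => evalI (ν ω)) := by
    have := Measure.isProbabilityMeasure_map (μ := P₁) hm1.aemeasurable
    have := Measure.isProbabilityMeasure_map (μ := P₂) hm2.aemeasurable
    refine IsProjectiveLimit.unique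
      (P := fun I => (P₂.map (fun ω => evalI (ν ω))).map I.restrict) (fun I => ?_) (fun I => rfl)
    refine cube_ext _ _ fun k => ?_
    rw [moment_eq P₁ μ hμ, moment_eq P₂ ν hν, hmom]
  ext B hB
  rw [measurableSpace_measure_eq] at hB
  obtain ⟨C, hC, rfl⟩ := hB
  have := congrArg (fun m => m C) hpi
  simp only [Measure.map_apply hm1 hC, Measure.map_apply hm2 hC] at this
  rw [Measure.map_apply hμ (measurable_evalI hC), Measure.map_apply hν (measurable_evalI hC)]
  exact this
end

section
/- Let m ∈ ℕ, σ > 0 and g : ℝ² → ℝ be continuous with compact support. For every ε > 0 there exists δ > 0 such that: for any n ≤ m, any reals z_1,…,z_n, w_1,…,w_n, and any centered Gaussian vector X = (X_1,…,X_n) with max_{i,j} |Cov(X_i,X_j) − σ²δ_{ij}| < δ, one has |log( E exp(∑_{i=1}^n g(z_i + X_i, w_i)) / E exp(∑_{i=1}^n g(z_i + Y_i, w_i)) )| < ε, where Y = (Y_1,…,Y_n) consists of i.i.d. N(0,σ²) variables. -/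
open MeasureTheory ProbabilityTheory

/-- A probability measure on `Fin n → ℝ` is a centered Gaussian law if each linear combination
of coordinates is a centered real Gaussian (with its own variance). -/
def IsCenteredGaussianLaw {n : ℕ} (ν : Measure (Fin n → ℝ)) : Prop :=
  ∀ a : Fin n → ℝ, Measure.map (fun x => ∑ i, a i * x i) ν
    = gaussianReal 0 (Real.toNNReal (∫ x, (∑ i, a i * x i) ^ 2 ∂ν))

lemma aux_map_lin {n : ℕ} (b : Fin n → ℝ) :
    (Measure.pi fun _ : Fin n => gaussianReal 0 1).map (fun x => ∑ i, b i * x i)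
      = gaussianReal 0 (Real.toNNReal (∑ i, b i ^ 2)) := by
  have : IsProbabilityMeasure ((Measure.pi fun _ : Fin n => gaussianReal 0 1).map
      (fun x => ∑ i, b i * x i)) :=
    Measure.isProbabilityMeasure_map (Measurable.aemeasurable (by fun_prop))
  apply Measure.ext_of_charFun
  ext t
  rw [charFun_apply_real, integral_map (Measurable.aemeasurable (by fun_prop))
    (Measurable.aestronglyMeasurable (by fun_prop))]
  have h : ∀ x : Fin n → ℝ, Complex.exp (t * ((∑ i, b i * x i : ℝ) : ℂ) * Complex.I)
      = ∏ i, Complex.exp (((t * b i : ℝ) : ℂ) * (x i : ℂ) * Complex.I) := by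
    intro x
    rw [← Complex.exp_sum]
    congr 1
    push_cast
    rw [Finset.mul_sum, Finset.sum_mul]
    exact Finset.sum_congr rfl fun i _ => by ring
  simp_rw [h]
  rw [integral_fintype_prod_eq_prod
    (f := fun i (x : ℝ) => Complex.exp (((t * b i : ℝ) : ℂ) * (x : ℂ) * Complex.I))]
  simp_rw [← charFun_apply_real, charFun_gaussianReal]
  rw [← Complex.exp_sum, Real.coe_toNNReal _ (Finset.sum_nonneg fun i _ => sq_nonneg _)]
  congr 1
  push_cast
  simp only [mul_zero, zero_mul, zero_sub, Finset.sum_neg_distrib, Finset.sum_mul, Finset.sum_div]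
  congr 1
  exact Finset.sum_congr rfl fun i _ => by ring

lemma aux_gauss_sq (v : NNReal) : ∫ x, x ^ 2 ∂(gaussianReal 0 v) = v := by
  have h := variance_fun_id_gaussianReal (μ := 0) (v := v)
  rw [variance_eq_integral measurable_id'.aemeasurable] at h
  simpa using h

lemma aux_memLp_lin {n : ℕ} (b : Fin n → ℝ) :
    MemLp (fun x : Fin n → ℝ => ∑ i, b i * x i) 2
      (Measure.pi fun _ : Fin n => gaussianReal 0 1) := by
  have h : MemLp id 2 ((Measure.pi fun _ : Fin n => gaussianReal 0 1).map
      (fun x => ∑ i, b i * x i)) := by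
    rw [aux_map_lin]; exact memLp_id_gaussianReal 2
  exact h.comp_of_map (Measurable.aemeasurable (by fun_prop))

lemma aux_int_lin {n : ℕ} (b : Fin n → ℝ) :
    ∫ x, (∑ i, b i * x i) ^ 2 ∂(Measure.pi fun _ : Fin n => gaussianReal 0 1)
      = ∑ i, b i ^ 2 := by
  have h := integral_map (μ := Measure.pi fun _ : Fin n => gaussianReal 0 1)
    (φ := fun x : Fin n → ℝ => ∑ i, b i * x i) (f := fun y : ℝ => y ^ 2)
    (Measurable.aemeasurable (by fun_prop)) (Measurable.aestronglyMeasurable (by fun_prop))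
  rw [aux_map_lin, aux_gauss_sq,
    Real.coe_toNNReal _ (Finset.sum_nonneg fun i _ => sq_nonneg _)] at h
  exact h.symm

lemma aux_memLp_coord {n : ℕ} {ν : Measure (Fin n → ℝ)} (hν : IsCenteredGaussianLaw ν)
    (i : Fin n) : MemLp (fun x : Fin n → ℝ => x i) 2 ν := by
  have h := hν (Pi.single i 1)
  simp only [Pi.single_apply, ite_mul, one_mul, zero_mul, Finset.sum_ite_eq',
    Finset.mem_univ, if_true] at h
  have h2 : MemLp id 2 (ν.map (fun x => x i)) := by
    rw [h]; exact memLp_id_gaussianReal 2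
  exact h2.comp_of_map (Measurable.aemeasurable (by fun_prop))

lemma aux_quad {n : ℕ} {ν : Measure (Fin n → ℝ)} (hν : IsCenteredGaussianLaw ν)
    (a : Fin n → ℝ) : ∫ x, (∑ i, a i * x i) ^ 2 ∂ν
      = ∑ i, ∑ j, a i * a j * ∫ x, x i * x j ∂ν := by
  have hint : ∀ i j, Integrable (fun x : Fin n → ℝ => x i * x j) ν := fun i j =>
    (aux_memLp_coord hν i).integrable_mul (aux_memLp_coord hν j)
  have h : ∀ x : Fin n → ℝ, (∑ i, a i * x i) ^ 2 = ∑ i, ∑ j, a i * a j * (x i * x j) := by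
    intro x
    rw [sq, Finset.sum_mul_sum]
    exact Finset.sum_congr rfl fun i _ => Finset.sum_congr rfl fun j _ => by ring
  simp_rw [h]
  rw [integral_finsetSum _ fun i _ => integrable_finsetSum _ fun j _ => (hint i j).const_mul _]
  refine Finset.sum_congr rfl fun i _ => ?_
  rw [integral_finsetSum _ fun j _ => (hint i j).const_mul _]
  exact Finset.sum_congr rfl fun j _ => integral_const_mul _ _

open Matrix in
open scoped MatrixOrder in
lemma aux_sqrt {n : ℕ} {C : Matrix (Fin n) (Fin n) ℝ} (hC : C.PosSemidef) :
    ∃ A : Matrix (Fin n) (Fin n) ℝ, A.PosSemidef ∧ A * A = C :=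
  ⟨CFC.sqrt C, (CFC.sqrt_nonneg C).posSemidef, CFC.sqrt_mul_sqrt_self C hC.nonneg⟩

open Matrix in
lemma aux_trace {n : ℕ} {A C : Matrix (Fin n) (Fin n) ℝ} (hA : A.PosSemidef) (hAC : A * A = C)
    {σ : ℝ} (hσ : 0 < σ) :
    σ ^ 2 * ∑ i, ∑ j, (A i j - σ * (if i = j then 1 else 0)) ^ 2
      ≤ ∑ i, ∑ j, (C i j - σ ^ 2 * (if i = j then 1 else 0)) ^ 2 := by
  have key : ∀ M : Matrix (Fin n) (Fin n) ℝ, Mᵀ = M → (M * M).trace = ∑ i, ∑ j, (M i j) ^ 2 := by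
    intro M hM
    simp only [Matrix.trace, Matrix.diag, Matrix.mul_apply]
    refine Finset.sum_congr rfl fun i _ => Finset.sum_congr rfl fun j _ => ?_
    have : M j i = M i j := by conv_rhs => rw [← hM, Matrix.transpose_apply]
    rw [this, sq]
  have hAt : Aᵀ = A := by simpa [Matrix.IsHermitian] using hA.1
  set D := A - σ • (1 : Matrix (Fin n) (Fin n) ℝ) with hD
  set E := C - σ ^ 2 • (1 : Matrix (Fin n) (Fin n) ℝ) with hE
  have hDt : Dᵀ = D := by simp [hD, hAt]
  have hEt : Eᵀ = E := by simp [hE, ← hAC, hAt]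
  have h1 := key D hDt
  have h2 := key E hEt
  have e1 : ∀ i j, D i j = A i j - σ * (if i = j then 1 else 0) := by
    intro i j; simp [hD, Matrix.one_apply]
  have e2 : ∀ i j, E i j = C i j - σ ^ 2 * (if i = j then 1 else 0) := by
    intro i j; simp [hE, Matrix.one_apply]
  simp only [e1] at h1
  simp only [e2] at h2
  rw [← h1, ← h2]
  have hEE : E * E = Dᴴ * (A * A + (2 * σ) • A) * D + σ ^ 2 • (D * D) := by
    rw [show Dᴴ = D by simpa using hDt]
    rw [hE, hD, ← hAC]
    simp only [Matrix.sub_mul, Matrix.mul_sub, Matrix.add_mul, Matrix.mul_add, smul_sub, smul_add,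
      Matrix.smul_mul, Matrix.mul_smul, Matrix.one_mul, Matrix.mul_one, smul_smul, Matrix.mul_assoc]
    module
  have hp : (A * A + (2 * σ) • A).PosSemidef := by
    refine Matrix.PosSemidef.add ?_ (hA.smul (by positivity))
    have := Matrix.posSemidef_conjTranspose_mul_self A
    rwa [show Aᴴ = A from hA.1] at this
  have := (hp.conjTranspose_mul_mul_same D).trace_nonneg
  rw [hEE, Matrix.trace_add, Matrix.trace_smul, smul_eq_mul]
  linarith

lemma aux_law {n : ℕ} {ν : Measure (Fin n → ℝ)} [IsProbabilityMeasure ν]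
    (hν : IsCenteredGaussianLaw ν) {A : Matrix (Fin n) (Fin n) ℝ} 
    (hA : ∀ i j, ∑ k, A i k * A j k = ∫ x, x i * x j ∂ν) :
    ν = (Measure.pi fun _ : Fin n => gaussianReal 0 1).map
      (fun x i => ∑ j, A i j * x j) := by
  have hm : Measurable (fun (x : Fin n → ℝ) i => ∑ j, A i j * x j) := by fun_prop
  have : IsProbabilityMeasure ((Measure.pi fun _ : Fin n => gaussianReal 0 1).map
      (fun x i => ∑ j, A i j * x j)) :=
    Measure.isProbabilityMeasure_map hm.aemeasurable
  apply Measure.ext_of_charFunDual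
  ext L
  rw [charFunDual_eq_charFun_map_one, charFunDual_eq_charFun_map_one]
  congr 1
  have hL : ⇑L = fun x : Fin n → ℝ => ∑ i, L (Pi.single i 1) * x i := by
    ext x
    conv_lhs => rw [pi_eq_sum_univ' x]
    rw [map_sum]
    refine Finset.sum_congr rfl fun i _ => ?_
    rw [map_smul, smul_eq_mul, mul_comm]
  rw [hL, hν, Measure.map_map (by fun_prop) hm]
  have : ((fun x : Fin n → ℝ => ∑ i, L (Pi.single i 1) * x i) ∘
      (fun (x : Fin n → ℝ) i => ∑ j, A i j * x j))
      = fun x : Fin n → ℝ => ∑ j, (∑ i, L (Pi.single i 1) * A i j) * x j := by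
    ext x
    simp only [Function.comp, Finset.mul_sum, Finset.sum_mul]
    rw [Finset.sum_comm]
    simp only [mul_assoc]
  rw [this, aux_map_lin, aux_quad hν]
  congr 2
  simp only [← hA, sq, Finset.mul_sum, Finset.sum_mul]
  rw [Finset.sum_comm]
  conv_rhs => rw [Finset.sum_comm]; enter [2, i]; rw [Finset.sum_comm]
  conv_lhs => rw [Finset.sum_comm]
  exact Finset.sum_congr rfl fun i _ => Finset.sum_congr rfl fun j _ => 
    Finset.sum_congr rfl fun k _ => by ring

lemma aux_coupling {n : ℕ} {ν : Measure (Fin n → ℝ)} [IsProbabilityMeasure ν]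
    (hν : IsCenteredGaussianLaw ν) {σ δ : ℝ} (hσ : 0 < σ)
    (h : ∀ i j : Fin n, |(∫ x, x i * x j ∂ν) - σ ^ 2 * (if i = j then 1 else 0)| < δ) :
    ∃ A : Matrix (Fin n) (Fin n) ℝ,
      ν = (Measure.pi fun _ : Fin n => gaussianReal 0 1).map (fun x i => ∑ j, A i j * x j) ∧
      ∑ i, ∑ j, (A i j - σ * (if i = j then 1 else 0)) ^ 2 ≤ n ^ 2 * δ ^ 2 / σ ^ 2 := by
  let C : Matrix (Fin n) (Fin n) ℝ := Matrix.of fun i j => ∫ x, x i * x j ∂ν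
  have hC : C.PosSemidef := by
    refine Matrix.PosSemidef.of_dotProduct_mulVec_nonneg ?_ ?_
    · ext i j
      simp only [C, Matrix.conjTranspose_apply, Matrix.of_apply, star_trivial, mul_comm]
    · intro a
      have h1 := aux_quad hν a
      have h2 : 0 ≤ ∫ x, (∑ i, a i * x i) ^ 2 ∂ν := integral_nonneg fun x => sq_nonneg _
      rw [h1] at h2
      refine h2.trans_eq (Eq.symm ?_)
      simp only [dotProduct, Matrix.mulVec, Finset.mul_sum, C, Matrix.of_apply]
      exact Finset.sum_congr rfl fun i _ => Finset.sum_congr rfl fun j _ => by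
        simp only [Pi.star_apply, star_trivial]; ring
  obtain ⟨A, hA, hAC⟩ := aux_sqrt hC
  have hAt : ∀ i j, A i j = A j i := by
    intro i j
    have := congrFun (congrFun hA.1 i) j
    simpa using this.symm
  refine ⟨A, aux_law hν ?_, ?_⟩
  · intro i j
    have := congrFun (congrFun hAC i) j
    rw [Matrix.mul_apply] at this
    simp only [C, Matrix.of_apply] at this
    rw [← this]
    exact Finset.sum_congr rfl fun k _ => by rw [hAt j k]
  · rw [le_div_iff₀ (by positivity), mul_comm]
    refine (aux_trace hA hAC hσ).trans ?_
    calc _ ≤ ∑ i : Fin n, ∑ j : Fin n, δ ^ 2 := by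
          refine Finset.sum_le_sum fun i _ => Finset.sum_le_sum fun j _ => ?_
          exact sq_le_sq.2 ((h i j).le.trans (le_abs_self δ))
      _ = _ := by simp; ring

lemma aux_pi {n : ℕ} (σ : ℝ) :
    (Measure.pi fun _ : Fin n => gaussianReal 0 (Real.toNNReal (σ ^ 2)))
      = (Measure.pi fun _ : Fin n => gaussianReal 0 1).map (fun x i => σ * x i) := by
  have h : (gaussianReal 0 1).map (fun x => σ * x) = gaussianReal 0 (Real.toNNReal (σ ^ 2)) := by
    rw [gaussianReal_map_const_mul]
    congr 1
    · simp
    · ext; simp [sq_nonneg]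
  have : IsProbabilityMeasure ((gaussianReal 0 1).map (fun x => σ * x)) := by
    rw [h]; infer_instance
  rw [Measure.pi_map_pi (f := fun _ x => σ * x) (fun i => by fun_prop)]
  simp_rw [h]

lemma aux_log {P Q k : ℝ} (hk : 0 < k) (hP : k ≤ P) (hQ : k ≤ Q) :
    |Real.log (P / Q)| ≤ |P - Q| / k := by
  have hP0 : 0 < P := hk.trans_le hP
  have hQ0 : 0 < Q := hk.trans_le hQ
  have h : ∀ a b : ℝ, 0 < a → k ≤ b → Real.log (a / b) ≤ |a - b| / k := by
    intro a b ha hb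
    have hb0 : 0 < b := hk.trans_le hb
    calc Real.log (a / b) ≤ a / b - 1 := Real.log_le_sub_one_of_pos (by positivity)
      _ = (a - b) / b := by field_simp
      _ ≤ |a - b| / b := by gcongr; exact le_abs_self _
      _ ≤ |a - b| / k := by gcongr
  rw [abs_le]
  constructor
  · have := h Q P hQ0 hP
    rw [← inv_div, Real.log_inv, abs_sub_comm] at this
    linarith
  · exact h P Q hP0 hQ

lemma aux_exp {a b B : ℝ} (ha : a ≤ B) (hb : b ≤ B) :
    |Real.exp a - Real.exp b| ≤ Real.exp B * |a - b| := by
  have h : ∀ a b : ℝ, a ≤ B → Real.exp a - Real.exp b ≤ Real.exp B * |a - b| := by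
    intro a b ha
    have h1 : Real.exp b = Real.exp a * Real.exp (b - a) := by rw [← Real.exp_add]; ring_nf
    have h2 := Real.add_one_le_exp (b - a)
    calc Real.exp a - Real.exp b = Real.exp a * (1 - Real.exp (b - a)) := by rw [h1]; ring
      _ ≤ Real.exp a * |a - b| := by
          gcongr
          linarith [le_abs_self (a - b)]
      _ ≤ Real.exp B * |a - b| := by gcongr
  rw [abs_le]
  constructor
  · have := h b a hb
    rw [abs_sub_comm] at this
    linarith
  · exact h a b ha

/-- Let `m ∈ ℕ`, `σ > 0` and `g : ℝ² → ℝ` continuous with compact support.  For every `ε > 0`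
there is `δ > 0` such that for any `n ≤ m`, reals `z_1,…,z_n, w_1,…,w_n` and any centered
Gaussian vector `X` with `max_{i,j} |Cov(X_i, X_j) - σ² δ_{ij}| < δ`, the Laplace-type
functionals of `X` and of an i.i.d. `N(0,σ²)` vector `Y` satisfy
`|log (E exp(∑ g(z_i + X_i, w_i)) / E exp(∑ g(z_i + Y_i, w_i)))| < ε`. -/
theorem almost_independent_gaussian_laplace_comparison
    (m : ℕ) (σ : ℝ) (hσ : 0 < σ) (g : ℝ → ℝ → ℝ)
    (hgc : Continuous (Function.uncurry g)) (hgs : HasCompactSupport (Function.uncurry g)) :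
    ∀ ε : ℝ, 0 < ε → ∃ δ : ℝ, 0 < δ ∧
      ∀ n : ℕ, n ≤ m → ∀ z w : Fin n → ℝ, ∀ ν : Measure (Fin n → ℝ),
        IsProbabilityMeasure ν → IsCenteredGaussianLaw ν →
        (∀ i j : Fin n, |(∫ x, x i * x j ∂ν) - σ ^ 2 * (if i = j then 1 else 0)| < δ) →
        |Real.log ((∫ x, Real.exp (∑ i, g (z i + x i) (w i)) ∂ν) /
            (∫ y, Real.exp (∑ i, g (z i + y i) (w i))
              ∂(Measure.pi fun _ : Fin n => gaussianReal 0 (Real.toNNReal (σ ^ 2)))))| < ε := by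
  intro ε hε
  obtain ⟨M, hM⟩ := hgc.bounded_above_of_compact_support hgs
  have hM0 : 0 ≤ M := (norm_nonneg _).trans (hM 0)
  have hgM : ∀ u v, |g u v| ≤ M := fun u v => hM (u, v)
  have huc := hgs.uniformContinuous_of_continuous hgc
  set K := Real.exp (m * M) with hK
  have hK0 : 0 < K := Real.exp_pos _
  set ε' := ε / (4 * (m + 1) * K ^ 2) with hε'
  have hε'0 : 0 < ε' := by positivity
  obtain ⟨η, hη, hηg⟩ := Metric.uniformContinuous_iff.1 huc ε' hε'0
  have hpt : ∀ u v w, |g u w - g v w| ≤ ε' + 2 * M / η ^ 2 * (u - v) ^ 2 := by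
    intro u v w
    by_cases huv : |u - v| < η
    · have h1 := @hηg (u, w) (v, w) (by simpa [Prod.dist_eq, Real.dist_eq, hη] using huv)
      rw [Real.dist_eq] at h1
      have h1' : |g u w - g v w| < ε' := h1
      have : 0 ≤ 2 * M / η ^ 2 * (u - v) ^ 2 := by positivity
      linarith
    · push Not at huv
      have h1 : |g u w - g v w| ≤ 2 * M := by
        have := abs_sub (g u w) (g v w)
        linarith [hgM u w, hgM v w]
      have h2 : η ^ 2 ≤ (u - v) ^ 2 := sq_le_sq.2 (by rwa [abs_of_pos hη])
      have h3 : 2 * M ≤ 2 * M / η ^ 2 * (u - v) ^ 2 := by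
        rw [div_mul_eq_mul_div, le_div_iff₀ (by positivity)]
        gcongr
      linarith
  set c := K ^ 2 * (2 * M / η ^ 2) * (m ^ 2 / σ ^ 2) with hc
  have hc0 : 0 ≤ c := by positivity
  refine ⟨min 1 (ε / (4 * (c + 1))), by positivity, ?_⟩
  set δ := min 1 (ε / (4 * (c + 1))) with hδ
  have hδ0 : 0 < δ := by positivity
  have hδ1 : δ ≤ 1 := min_le_left _ _
  have hδ2 : c * δ ^ 2 ≤ ε / 4 := by
    have h1 : δ ≤ ε / (4 * (c + 1)) := min_le_right _ _
    rw [le_div_iff₀ (by positivity)] at h1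
    have h2 : δ ^ 2 ≤ δ := by nlinarith
    nlinarith
  intro n hn z w ν hνp hν hcov
  obtain ⟨A, hlaw, hAσ⟩ := aux_coupling hν hσ hcov
  have hnm : (n : ℝ) ≤ m := by exact_mod_cast hn
  set μ := Measure.pi fun _ : Fin n => gaussianReal 0 1 with hμ
  have hgw : ∀ i, Continuous fun u => g u (w i) := fun i =>
    hgc.comp (continuous_id.prodMk continuous_const)
  have hFc : Continuous fun x : Fin n → ℝ => Real.exp (∑ i, g (z i + x i) (w i)) := by
    refine Real.continuous_exp.comp (continuous_finsetSum _ fun i _ => ?_)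
    exact (hgw i).comp (by fun_prop)
  have hsum : ∀ x : Fin n → ℝ, |∑ i, g (z i + x i) (w i)| ≤ m * M := by
    intro x
    calc _ ≤ ∑ i, |g (z i + x i) (w i)| := Finset.abs_sum_le_sum_abs _ _
      _ ≤ ∑ i : Fin n, M := Finset.sum_le_sum fun i _ => hgM _ _
      _ = n * M := by simp
      _ ≤ m * M := by gcongr
  have mA : Measurable (fun (x : Fin n → ℝ) i => ∑ j, A i j * x j) := by fun_prop
  have mS : Measurable (fun (x : Fin n → ℝ) i => σ * x i) := by fun_prop
  rw [aux_pi σ, hlaw, integral_map mA.aemeasurable hFc.measurable.aestronglyMeasurable,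
    integral_map mS.aemeasurable hFc.measurable.aestronglyMeasurable]
  set F : (Fin n → ℝ) → ℝ := fun x => Real.exp (∑ i, g (z i + x i) (w i)) with hF
  have hFi : ∀ T : (Fin n → ℝ) → (Fin n → ℝ), Measurable T → Integrable (fun x => F (T x)) μ := by
    intro T hT
    refine Integrable.of_bound (hFc.measurable.comp hT).aestronglyMeasurable K
      (Filter.Eventually.of_forall fun x => ?_)
    rw [Real.norm_eq_abs, hF, Real.abs_exp]
    exact Real.exp_le_exp.2 ((le_abs_self _).trans (hsum _))
  have hFl : ∀ T : (Fin n → ℝ) → (Fin n → ℝ), Measurable T → K⁻¹ ≤ ∫ x, F (T x) ∂μ := by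
    intro T hT
    have : ∫ x, K⁻¹ ∂μ ≤ ∫ x, F (T x) ∂μ := by
      refine integral_mono (integrable_const _) (hFi T hT) fun x => ?_
      rw [hK, ← Real.exp_neg]
      exact Real.exp_le_exp.2 (neg_le_of_abs_le (hsum _))
    simpa using this
  have hlog := aux_log (inv_pos.2 hK0) (hFl _ mA) (hFl _ mS)
  refine hlog.trans_lt ?_
  rw [← integral_sub (hFi _ mA) (hFi _ mS), div_inv_eq_mul]
  have hdiff : ∀ x : Fin n → ℝ, ∀ i, (∑ j, A i j * x j) - σ * x i
      = ∑ j, (A i j - σ * (if i = j then 1 else 0)) * x j := by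
    intro x i
    simp [sub_mul, Finset.sum_sub_distrib]
  have hbound : ∀ x : Fin n → ℝ,
      ‖F (fun i => ∑ j, A i j * x j) - F (fun i => σ * x i)‖
        ≤ K * ∑ i, (ε' + 2 * M / η ^ 2 *
          (∑ j, (A i j - σ * (if i = j then 1 else 0)) * x j) ^ 2) := by
    intro x
    rw [Real.norm_eq_abs]
    refine (aux_exp ((le_abs_self _).trans (hsum _)) ((le_abs_self _).trans (hsum _))).trans ?_
    rw [← Finset.sum_sub_distrib]
    gcongr
    refine (Finset.abs_sum_le_sum_abs _ _).trans (Finset.sum_le_sum fun i _ => ?_)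
    refine (hpt _ _ _).trans_eq ?_
    rw [← hdiff]
    ring
  have hi : ∀ i, Integrable (fun x : Fin n → ℝ => ε' + 2 * M / η ^ 2 *
          (∑ j, (A i j - σ * (if i = j then 1 else 0)) * x j) ^ 2) μ := fun i =>
    (integrable_const _).add ((aux_memLp_lin _).integrable_sq.const_mul _)
  have hI : |∫ x, (F (fun i => ∑ j, A i j * x j) - F (fun i => σ * x i)) ∂μ|
      ≤ K * (n * ε' + 2 * M / η ^ 2 *
        ∑ i, ∑ j, (A i j - σ * (if i = j then 1 else 0)) ^ 2) := by
    rw [← Real.norm_eq_abs]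
    refine (norm_integral_le_of_norm_le ((integrable_finsetSum _ fun i _ => hi i).const_mul K)
      (Filter.Eventually.of_forall hbound)).trans_eq ?_
    rw [integral_const_mul, integral_finsetSum _ fun i _ => hi i]
    congr 1
    have : ∀ i, ∫ x, (ε' + 2 * M / η ^ 2 *
          (∑ j, (A i j - σ * (if i = j then 1 else 0)) * x j) ^ 2) ∂μ
        = ε' + 2 * M / η ^ 2 * ∑ j, (A i j - σ * (if i = j then 1 else 0)) ^ 2 := by
      intro i
      rw [integral_add (integrable_const _) ((aux_memLp_lin _).integrable_sq.const_mul _),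
        integral_const_mul, aux_int_lin]
      simp
    simp_rw [this]
    rw [Finset.sum_add_distrib, ← Finset.mul_sum]
    simp
  calc _ ≤ K * (n * ε' + 2 * M / η ^ 2 *
        ∑ i, ∑ j, (A i j - σ * (if i = j then 1 else 0)) ^ 2) * K := by gcongr
    _ ≤ K * (m * ε' + 2 * M / η ^ 2 * (m ^ 2 * δ ^ 2 / σ ^ 2)) * K := by
        have : (n : ℝ) ^ 2 * δ ^ 2 / σ ^ 2 ≤ m ^ 2 * δ ^ 2 / σ ^ 2 := by gcongr
        gcongr
        exact hAσ.trans this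
    _ = K ^ 2 * m * ε' + c * δ ^ 2 := by rw [hc]; ring
    _ ≤ ε / 4 + ε / 4 := by
        refine add_le_add ?_ hδ2
        rw [hε', mul_div_assoc', div_le_iff₀ (by positivity)]
        have : 0 < K ^ 2 * ε := by positivity
        nlinarith
    _ < ε := by linarith
end

section
/- Fix γ > 0 and define L_n(j) = γ log((j ∧ (n−j)) ∨ 1) for j = 0,…,n. There exists c > 0 (depending on γ) such that for every n ∈ ℕ, the Brownian bridge (W^n_t)_{0≤t≤n} from 0 to 0 satisfies P(W^n_t ≤ 1 − L_n(t) for all t ∈ [0, n]) ≥ c/n. -/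
open MeasureTheory ProbabilityTheory

namespace BBLog

noncomputable section

/-- heat kernel -/
@[irreducible] def pk (t x : ℝ) : ℝ := (Real.sqrt (2 * Real.pi * t))⁻¹ * Real.exp (-x ^ 2 / (2 * t))

/-- killed heat kernel -/
@[irreducible] def kd (t x y : ℝ) : ℝ := pk t (x - y) - pk t (x + y)

lemma pk_neg (t x : ℝ) : pk t (-x) = pk t x := by simp [pk]

lemma pk_nonneg (t x : ℝ) : 0 ≤ pk t x := by unfold pk; positivity

lemma pk_pos {t : ℝ} (ht : 0 < t) (x : ℝ) : 0 < pk t x := by unfold pk; positivity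

lemma pk_eq {t : ℝ} (ht : 0 ≤ t) (μ x : ℝ) :
    pk t (x - μ) = gaussianPDFReal μ t.toNNReal x := by
  simp [pk, gaussianPDFReal, ht]

lemma pk_continuous (t : ℝ) : Continuous (pk t) := by
  unfold pk; fun_prop

lemma pk_measurable : Measurable (fun q : ℝ × ℝ => pk q.1 q.2) := by
  unfold pk; fun_prop

lemma kd_symm (t x y : ℝ) : kd t x y = kd t y x := by
  unfold kd; rw [add_comm, ← pk_neg t (x - y), neg_sub]

lemma kd_neg (t x y : ℝ) : kd t x (-y) = - kd t x y := by
  unfold kd; rw [sub_neg_eq_add, ← sub_eq_add_neg]; ring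

lemma kd_neg_left (t x y : ℝ) : kd t (-x) y = - kd t x y := by
  rw [kd_symm, kd_neg, kd_symm]

lemma kd_eq {t : ℝ} (ht : 0 < t) (x y : ℝ) :
    kd t x y = pk t (x - y) * (1 - Real.exp (-(2 * x * y / t))) := by
  unfold kd pk
  have h : Real.exp (-(x + y) ^ 2 / (2 * t))
      = Real.exp (-(x - y) ^ 2 / (2 * t)) * Real.exp (-(2 * x * y / t)) := by
    rw [← Real.exp_add]
    congr 1
    field_simp; ring
  rw [h]; ring

lemma kd_nonneg {t : ℝ} (ht : 0 < t) {x y : ℝ} (hx : 0 ≤ x) (hy : 0 ≤ y) : 0 ≤ kd t x y := by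
  rw [kd_eq ht]
  refine mul_nonneg (pk_nonneg _ _) ?_
  have : 0 ≤ 2 * x * y / t := by positivity
  have := Real.exp_le_one_iff.2 (neg_nonpos.2 this)
  linarith

lemma kd_le_pk (t x y : ℝ) : kd t x y ≤ pk t (x - y) := by
  unfold kd; linarith [pk_nonneg t (x + y)]

lemma kd_measurable (t : ℝ) : Measurable (fun q : ℝ × ℝ => kd t q.1 q.2) := by
  unfold kd pk; fun_prop

/-- `K(s,x,w) ≤ p_s (1+2xw)/(1+s)` -/
lemma kd_le {t : ℝ} (ht : 0 < t) {x y : ℝ} (hx : 0 ≤ x) (hy : 0 ≤ y) :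
    kd t x y ≤ pk t (x - y) * ((1 + 2 * x * y) / (1 + t)) := by
  rw [kd_eq ht]
  refine mul_le_mul_of_nonneg_left ?_ (pk_nonneg _ _)
  set a := 2 * x * y with ha
  have ha0 : 0 ≤ a := by positivity
  rw [le_div_iff₀ (by positivity)]
  have h1 : 1 - Real.exp (-(a / t)) ≤ 1 := by linarith [Real.exp_pos (-(a/t))]
  have h2 : 1 - Real.exp (-(a / t)) ≤ a / t := by linarith [Real.add_one_le_exp (-(a/t))]
  have h3 : (1 - Real.exp (-(a / t))) * t ≤ a := by
    calc _ ≤ a / t * t := by gcongr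
      _ = a := by field_simp
  linarith

lemma kd_ge {t : ℝ} (ht : 1 ≤ t) {z : ℝ} (hz : 1/2 ≤ z) (hz1 : z ≤ 1) :
    pk t (1/2 - z) / (4 * t) ≤ kd t (1/2) z := by
  have ht0 : 0 < t := by linarith
  rw [kd_eq ht0, div_eq_mul_inv]
  refine mul_le_mul_of_nonneg_left ?_ (pk_nonneg _ _)
  set a := 2 * (1/2) * z / t with ha
  have ha1 : a ≤ 1 := by rw [ha, div_le_one ht0]; linarith
  have ha0 : 0 ≤ a := by positivity
  have hb : (4 * t)⁻¹ ≤ a / 2 := by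
    rw [ha]
    have : (4 * t)⁻¹ = (1/2) / t / 2 := by field_simp; norm_num
    rw [this]; gcongr; linarith
  have h : Real.exp (-a) ≤ 1 - a / 2 := by
    have h1 : Real.exp (-a) ≤ 1 / (1 + a) := by
      rw [Real.exp_neg, ← one_div]
      apply one_div_le_one_div_of_le (by positivity)
      linarith [Real.add_one_le_exp a]
    refine h1.trans ?_
    rw [div_le_iff₀ (by positivity)]
    nlinarith
  linarith

lemma pk_mul {s t : ℝ} (hs : 0 < s) (ht : 0 < t) (x y z : ℝ) :
    pk s (x - y) * pk t (y - z)
      = pk (s + t) (x - z) * pk (s * t / (s + t)) (y - (t * x + s * z) / (s + t)) := by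
  unfold pk
  have h1 : (Real.sqrt (2 * Real.pi * s))⁻¹ * (Real.sqrt (2 * Real.pi * t))⁻¹
     = (Real.sqrt (2 * Real.pi * (s + t)))⁻¹ * (Real.sqrt (2 * Real.pi * (s * t / (s + t))))⁻¹ := by
    rw [← mul_inv, ← mul_inv, ← Real.sqrt_mul (by positivity), ← Real.sqrt_mul (by positivity)]
    congr 2
    field_simp
  have h2 : Real.exp (-(x - y) ^ 2 / (2 * s)) * Real.exp (-(y - z) ^ 2 / (2 * t))
     = Real.exp (-(x - z) ^ 2 / (2 * (s + t))) *
       Real.exp (-(y - (t * x + s * z) / (s + t)) ^ 2 / (2 * (s * t / (s + t)))) := by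
    rw [← Real.exp_add, ← Real.exp_add]
    congr 1
    field_simp
    ring
  linear_combination (Real.exp (-(x - y) ^ 2 / (2 * s)) * Real.exp (-(y - z) ^ 2 / (2 * t))) * h1
    + ((Real.sqrt (2 * Real.pi * (s + t)))⁻¹ * (Real.sqrt (2 * Real.pi * (s * t / (s + t))))⁻¹) * h2

lemma integrable_pk {t : ℝ} (ht : 0 < t) (μ : ℝ) : Integrable (fun y => pk t (y - μ)) := by
  simp_rw [pk_eq ht.le]; exact integrable_gaussianPDFReal _ _

lemma integral_pk {t : ℝ} (ht : 0 < t) (μ : ℝ) : ∫ y, pk t (y - μ) = 1 := by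
  simp_rw [pk_eq ht.le]; exact integral_gaussianPDFReal_eq_one _ (by simpa using ht)

lemma integrable_pk_mul {s t : ℝ} (hs : 0 < s) (ht : 0 < t) (x z : ℝ) :
    Integrable (fun y => pk s (x - y) * pk t (y - z)) := by
  simp_rw [pk_mul hs ht]
  exact (integrable_pk (by positivity) _).const_mul _

lemma integral_pk_mul {s t : ℝ} (hs : 0 < s) (ht : 0 < t) (x z : ℝ) :
    ∫ y, pk s (x - y) * pk t (y - z) = pk (s + t) (x - z) := by
  simp_rw [pk_mul hs ht]
  rw [integral_const_mul, integral_pk (by positivity), mul_one]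

lemma kd_mul_expand (s t x y z : ℝ) : kd s x y * kd t y z =
    pk s (x - y) * pk t (y - z) - pk s (x - y) * pk t (y - (-z))
    - pk s (-x - y) * pk t (y - z) + pk s (-x - y) * pk t (y - (-z)) := by
  have h : pk s (-x - y) = pk s (x + y) := by rw [← pk_neg]; congr 1; ring
  rw [h, sub_neg_eq_add]; unfold kd; ring

lemma integrable_kd_mul {s t : ℝ} (hs : 0 < s) (ht : 0 < t) (x z : ℝ) :
    Integrable (fun y => kd s x y * kd t y z) := by
  simp_rw [kd_mul_expand]
  exact (((integrable_pk_mul hs ht x z).sub (integrable_pk_mul hs ht x (-z))).sub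
    (integrable_pk_mul hs ht (-x) z)).add (integrable_pk_mul hs ht (-x) (-z))

lemma integral_kd_mul {s t : ℝ} (hs : 0 < s) (ht : 0 < t) (x z : ℝ) :
    ∫ y in Set.Ioi 0, kd s x y * kd t y z = kd (s + t) x z := by
  have h1 := integral_comp_abs (f := fun y => kd s x y * kd t y z)
  have h2 : (fun y : ℝ => kd s x |y| * kd t |y| z) = fun y => kd s x y * kd t y z := by
    funext y
    rcases abs_choice y with h | h <;> rw [h]
    rw [kd_neg, kd_neg_left]; ring
  rw [h2] at h1
  have h3 : ∫ y, kd s x y * kd t y z = 2 * kd (s + t) x z := by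
    simp_rw [kd_mul_expand]
    rw [integral_add, integral_sub, integral_sub]
    · simp_rw [integral_pk_mul hs ht]
      rw [show -x - z = -(x + z) by ring, show -x - -z = -(x - z) by ring,
        show x - -z = x + z by ring, pk_neg, pk_neg]
      unfold kd; ring
    · exact integrable_pk_mul hs ht _ _
    · exact integrable_pk_mul hs ht _ _
    · exact (integrable_pk_mul hs ht x z).sub (integrable_pk_mul hs ht x (-z))
    · exact integrable_pk_mul hs ht _ _
    · exact ((integrable_pk_mul hs ht x z).sub (integrable_pk_mul hs ht x (-z))).sub
        (integrable_pk_mul hs ht (-x) z)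
    · exact integrable_pk_mul hs ht _ _
  linarith

/-- killed heat kernel, extended nonnegative version -/
@[irreducible] def KK (t x y : ℝ) : ENNReal := ENNReal.ofReal (kd t x y)

lemma KK_measurable (t : ℝ) : Measurable (fun q : ℝ × ℝ => KK t q.1 q.2) := by
  unfold KK
  exact (kd_measurable t).ennreal_ofReal

lemma KK_measurable_left (t y : ℝ) : Measurable (fun x => KK t x y) :=
  (KK_measurable t).comp (measurable_id.prodMk measurable_const)

lemma KK_measurable_right (t x : ℝ) : Measurable (fun y => KK t x y) :=
  (KK_measurable t).comp (measurable_const.prodMk measurable_id)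

/-- Chapman-Kolmogorov -/
lemma KK_CK {s t : ℝ} (hs : 0 < s) (ht : 0 < t) {x z : ℝ} (hx : 0 ≤ x) (hz : 0 ≤ z) :
    ∫⁻ y in Set.Ioi 0, KK s x y * KK t y z = KK (s + t) x z := by
  unfold KK
  rw [← integral_kd_mul hs ht, ofReal_integral_eq_lintegral_ofReal
    (integrable_kd_mul hs ht x z).integrableOn]
  · refine setLIntegral_congr_fun measurableSet_Ioi fun y (hy : 0 < y) => ?_
    exact (ENNReal.ofReal_mul (kd_nonneg hs hx hy.le)).symm
  · filter_upwards [ae_restrict_mem measurableSet_Ioi] with y (hy : 0 < y)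
    exact mul_nonneg (kd_nonneg hs hx hy.le) (kd_nonneg ht hy.le hz)

/-- weighted two-step kernel -/
@[irreducible] def JJ (s t x z : ℝ) : ENNReal :=
  ∫⁻ w in Set.Ioi 0, KK s x w * ENNReal.ofReal w * KK t w z

lemma JJ_measurable (s t x : ℝ) : Measurable (fun z => JJ s t x z) := by
  unfold JJ
  apply Measurable.lintegral_prod_right' (f := fun q : ℝ × ℝ =>
    KK s x q.2 * ENNReal.ofReal q.2 * KK t q.2 q.1)
  have h1 : Measurable fun q : ℝ × ℝ => KK s x q.2 := (KK_measurable_right s x).comp measurable_snd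
  have h2 : Measurable fun q : ℝ × ℝ => KK t q.2 q.1 :=
    (KK_measurable t).comp (measurable_snd.prodMk measurable_fst)
  fun_prop

lemma JJ_CK {s t δ : ℝ} (ht : 0 < t) (hδ : 0 < δ) {x z : ℝ} (hz : 0 ≤ z) :
    ∫⁻ y in Set.Ioi 0, JJ s t x y * KK δ y z = JJ s (t + δ) x z := by
  unfold JJ
  have h1 : Measurable fun q : ℝ × ℝ => KK s x q.2 := (KK_measurable_right s x).comp measurable_snd
  have h2 : Measurable fun q : ℝ × ℝ => KK t q.2 q.1 :=
    (KK_measurable t).comp (measurable_snd.prodMk measurable_fst)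
  have h3 : Measurable fun q : ℝ × ℝ => KK δ q.1 z := (KK_measurable_left δ z).comp measurable_fst
  calc _ = ∫⁻ y in Set.Ioi 0, ∫⁻ w in Set.Ioi 0,
        KK s x w * ENNReal.ofReal w * KK t w y * KK δ y z := by
        refine lintegral_congr fun y => ?_
        rw [lintegral_mul_const]
        exact ((KK_measurable_right s x).mul (by fun_prop)).mul (KK_measurable_left t y)
    _ = ∫⁻ w in Set.Ioi 0, ∫⁻ y in Set.Ioi 0,
        KK s x w * ENNReal.ofReal w * KK t w y * KK δ y z := by
        apply lintegral_lintegral_swap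
        apply Measurable.aemeasurable
        unfold Function.uncurry
        fun_prop
    _ = _ := by
        refine setLIntegral_congr_fun measurableSet_Ioi fun w (hw : 0 < w) => ?_
        simp only [mul_assoc]
        rw [← KK_CK ht hδ hw.le hz, lintegral_const_mul, lintegral_const_mul]
        · exact (KK_measurable_right t w).mul (KK_measurable_left δ z)
        · exact measurable_const.mul ((KK_measurable_right t w).mul (KK_measurable_left δ z))

end

end BBLog

open MeasureTheory ProbabilityTheory

namespace BBLog

noncomputable section

lemma gauss_moment : ∃ D : ℝ, 0 ≤ D ∧ ∀ v : ℝ, 0 < v → ∀ μ : ℝ, 0 ≤ μ → μ ≤ 1 →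
    ∫⁻ w, ENNReal.ofReal ((1 + 2 * |w|) ^ 3) * ENNReal.ofReal (pk v (w - μ))
      ≤ ENNReal.ofReal (D * (1 + Real.sqrt v) ^ 3) := by
  have hintg : Integrable (fun g : ℝ => (3 + 2 * |g|) ^ 3) (gaussianReal 0 1) := by
    have h3 : MemLp (fun g : ℝ => 3 + 2 * |g|) 3 (gaussianReal 0 1) := by
      have := memLp_id_gaussianReal' (μ := 0) (v := 1) (3 : ENNReal) (by norm_num)
      have a : MemLp (fun _ : ℝ => (3:ℝ)) (3 : ENNReal) (gaussianReal 0 1) := memLp_const _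
      have b : MemLp (fun g : ℝ => 2 * |g|) (3 : ENNReal) (gaussianReal 0 1) :=
        MemLp.const_mul (f := fun g : ℝ => |g|) this.norm 2
      exact a.add b
    have := MemLp.integrable_norm_pow (p := 3) (by exact_mod_cast h3) (by norm_num)
    refine this.congr (Filter.Eventually.of_forall fun g => ?_)
    have : 0 ≤ 3 + 2 * |g| := by positivity
    simp [abs_of_nonneg this]
  refine ⟨∫ g, (3 + 2 * |g|) ^ 3 ∂(gaussianReal 0 1), integral_nonneg fun g => by positivity, ?_⟩
  intro v hv μ h0 h1
  have hmap : (gaussianReal 0 1).map (fun g => Real.sqrt v * g + μ)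
      = gaussianReal μ v.toNNReal := by
    have e : (fun g : ℝ => Real.sqrt v * g + μ) = (fun x => x + μ) ∘ (fun g => Real.sqrt v * g) := rfl
    rw [e, ← Measure.map_map (by fun_prop) (by fun_prop), gaussianReal_map_const_mul,
      gaussianReal_map_add_const]
    congr 1
    · simp
    · ext; simp [Real.sq_sqrt hv.le, hv.le]
  have hv' : v.toNNReal ≠ 0 := by simpa using hv
  have e1 : ∫⁻ w, ENNReal.ofReal ((1 + 2 * |w|) ^ 3) * ENNReal.ofReal (pk v (w - μ))
      = ∫⁻ w, ENNReal.ofReal ((1 + 2 * |w|) ^ 3) ∂(gaussianReal μ v.toNNReal) := by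
    rw [gaussianReal_of_var_ne_zero _ hv', lintegral_withDensity_eq_lintegral_mul]
    · refine lintegral_congr fun w => ?_
      rw [Pi.mul_apply, gaussianPDF, ← pk_eq hv.le, mul_comm]
    · exact measurable_gaussianPDF _ _
    · fun_prop
  rw [e1, ← hmap, lintegral_map (by fun_prop) (by fun_prop), mul_comm, ENNReal.ofReal_mul (by positivity),
    ofReal_integral_eq_lintegral_ofReal hintg (Filter.Eventually.of_forall fun g => by positivity),
    ← lintegral_const_mul _ (by fun_prop)]
  refine lintegral_mono fun g => ?_
  rw [← ENNReal.ofReal_mul (by positivity), ← mul_pow]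
  refine ENNReal.ofReal_le_ofReal ?_
  gcongr
  have hs := Real.sqrt_nonneg v
  have : |Real.sqrt v * g + μ| ≤ Real.sqrt v * |g| + 1 := by
    refine (abs_add_le _ _).trans ?_
    rw [abs_mul, abs_of_nonneg hs, abs_of_nonneg h0]; linarith
  nlinarith [abs_nonneg g]

lemma JJ_le : ∃ C : ℝ, 0 ≤ C ∧ ∀ s t : ℝ, 0 < s → 0 < t → 1 ≤ s + t → ∀ z : ℝ, 1/2 ≤ z → z ≤ 1 →
    JJ s t (1/2) z ≤ ENNReal.ofReal (C * (1 + Real.sqrt (s * t / (s + t)))) * KK (s + t) (1/2) z := by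
  obtain ⟨D, hD, hg⟩ := gauss_moment
  refine ⟨8 * D, by positivity, fun s t hs ht hst z hz hz1 => ?_⟩
  set v := s * t / (s + t) with hv
  have hv0 : 0 < v := by positivity
  set μ := (t * (1/2) + s * z) / (s + t) with hμ
  have hμ0 : 0 ≤ μ := by positivity
  have hμ1 : μ ≤ 1 := by
    rw [hμ, div_le_one (by positivity)]; nlinarith
  set a := pk (s + t) (1/2 - z) / ((1 + s) * (1 + t)) with ha
  have ha0 : 0 ≤ a := div_nonneg (pk_nonneg _ _) (by positivity)
  have step1 : JJ s t (1/2) z ≤ ENNReal.ofReal (a * (D * (1 + Real.sqrt v) ^ 3)) := by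
    rw [ENNReal.ofReal_mul ha0]
    refine le_trans ?_ (mul_le_mul_right (hg v hv0 μ hμ0 hμ1) _)
    rw [← lintegral_const_mul _ (by have := (pk_continuous v).measurable; fun_prop)]
    unfold JJ
    refine le_trans ?_ (setLIntegral_le_lintegral (Set.Ioi 0) _)
    refine setLIntegral_mono' measurableSet_Ioi fun w (hw : 0 < w) => ?_
    unfold KK
    rw [← ENNReal.ofReal_mul (kd_nonneg hs (by norm_num) hw.le),
      ← ENNReal.ofReal_mul (mul_nonneg (kd_nonneg hs (by norm_num) hw.le) hw.le),
      ← ENNReal.ofReal_mul (by positivity), ← ENNReal.ofReal_mul ha0]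
    refine ENNReal.ofReal_le_ofReal ?_
    have k1 := kd_le hs (x := 1/2) (by norm_num) hw.le
    have k2 := kd_le ht hw.le (by linarith : 0 ≤ z)
    have pm := pk_mul hs ht (1/2) w z
    rw [← hv, ← hμ] at pm
    rw [abs_of_pos hw]
    have p1 := pk_nonneg s (1/2 - w)
    have p2 := pk_nonneg t (w - z)
    have hq : 0 ≤ pk s (1/2 - w) * ((1 + 2 * (1/2) * w) / (1 + s)) := by positivity
    calc kd s (1/2) w * w * kd t w z
        ≤ (pk s (1/2 - w) * ((1 + 2 * (1/2) * w) / (1 + s))) * w *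
          (pk t (w - z) * ((1 + 2 * w * z) / (1 + t))) := by
          gcongr
          exact kd_nonneg ht hw.le (by linarith)
      _ = (pk s (1/2 - w) * pk t (w - z)) / ((1 + s) * (1 + t)) *
          ((1 + w) * w * (1 + 2 * w * z)) := by
          field_simp
      _ = a * pk v (w - μ) * ((1 + w) * w * (1 + 2 * w * z)) := by
          rw [pm, ha]; ring
      _ ≤ a * pk v (w - μ) * ((1 + 2 * w) * (1 + 2 * w) * (1 + 2 * w)) := by
          have := pk_nonneg v (w - μ)
          have hwz : w * z ≤ w := by nlinarith
          refine mul_le_mul_of_nonneg_left ?_ (mul_nonneg ha0 this)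
          refine mul_le_mul (mul_le_mul ?_ ?_ ?_ ?_) ?_ ?_ ?_ <;> first | positivity | nlinarith
      _ = a * ((1 + 2 * w) ^ 3 * pk v (w - μ)) := by ring
  refine step1.trans ?_
  unfold KK
  rw [← ENNReal.ofReal_mul (by positivity)]
  refine ENNReal.ofReal_le_ofReal ?_
  have kg := kd_ge hst hz hz1
  refine le_trans ?_ (mul_le_mul_of_nonneg_left kg (by positivity))
  have hσ := Real.sqrt_nonneg v
  have hσ2 : (Real.sqrt v) ^ 2 = v := Real.sq_sqrt hv0.le
  set σ := Real.sqrt v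
  have hp := pk_nonneg (s + t) (1/2 - z)
  have key : (1 + σ) ^ 2 * (s + t) ≤ 2 * ((1 + s) * (1 + t)) := by
    have e : v * (s + t) = s * t := by rw [hv]; field_simp
    nlinarith [sq_nonneg (1 - σ)]
  have hst0 : 0 < s + t := by linarith
  have e1 : a * (D * (1 + σ) ^ 3) = pk (s + t) (1/2 - z) * D * (1 + σ) *
     ((1 + σ) ^ 2 / ((1 + s) * (1 + t))) := by rw [ha]; ring
  have e2 : 8 * D * (1 + σ) * (pk (s + t) (1/2 - z) / (4 * (s + t)))
     = pk (s + t) (1/2 - z) * D * (1 + σ) * (2 / (s + t)) := by field_simp; ring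
  rw [e1, e2]
  have : (1 + σ) ^ 2 / ((1 + s) * (1 + t)) ≤ 2 / (s + t) := by
    rw [div_le_div_iff₀ (by positivity) hst0]; exact key
  gcongr

/-- Feynman-Kac weighted iterated kernel -/
def HH (δ : ℝ) (m : ℕ → ℝ) : ℕ → ℝ → ENNReal
  | 0 => fun y => KK δ (1/2) y
  | j + 1 => fun y' => ∫⁻ y in Set.Ioi 0,
      HH δ m j y * ENNReal.ofReal (Real.exp (-((m j - m (j + 1)) * y))) * KK δ y y'

/-- first-order term -/
def SS (δ : ℝ) (m : ℕ → ℝ) : ℕ → ℝ → ENNReal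
  | 0 => fun _ => 0
  | j + 1 => fun y' => ∫⁻ y in Set.Ioi 0,
      (SS δ m j y + ENNReal.ofReal ((m j - m (j + 1)) * y) * KK ((j + 1) * δ) (1/2) y) * KK δ y y'

lemma HH_measurable (δ : ℝ) (m : ℕ → ℝ) (j : ℕ) : Measurable (HH δ m j) := by
  induction j with
  | zero => exact KK_measurable_right _ _
  | succ j ih =>
    unfold HH
    apply Measurable.lintegral_prod_right' (f := fun q : ℝ × ℝ =>
      HH δ m j q.2 * ENNReal.ofReal (Real.exp (-((m j - m (j + 1)) * q.2))) * KK δ q.2 q.1)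
    have h2 : Measurable fun q : ℝ × ℝ => KK δ q.2 q.1 :=
      (KK_measurable δ).comp (measurable_snd.prodMk measurable_fst)
    fun_prop

lemma SS_measurable (δ : ℝ) (m : ℕ → ℝ) (j : ℕ) : Measurable (SS δ m j) := by
  induction j with
  | zero => exact measurable_const
  | succ j ih =>
    unfold SS
    apply Measurable.lintegral_prod_right' (f := fun q : ℝ × ℝ =>
      (SS δ m j q.2 + ENNReal.ofReal ((m j - m (j + 1)) * q.2) * KK ((j + 1) * δ) (1/2) q.2)
        * KK δ q.2 q.1)
    have h2 : Measurable fun q : ℝ × ℝ => KK δ q.2 q.1 :=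
      (KK_measurable δ).comp (measurable_snd.prodMk measurable_fst)
    have h3 : Measurable fun q : ℝ × ℝ => KK ((j + 1) * δ) (1/2) q.2 :=
      (KK_measurable_right _ _).comp measurable_snd
    fun_prop

lemma jensen {δ : ℝ} (hδ : 0 < δ) (m : ℕ → ℝ) (j : ℕ) :
    ∀ M y' : ℝ, 0 < y' → ENNReal.ofReal ((1 + M) * Real.exp (-M)) * KK ((j + 1) * δ) (1/2) y'
      ≤ HH δ m j y' + ENNReal.ofReal (Real.exp (-M)) * SS δ m j y' := by
  induction j with
  | zero =>
    intro M y' hy'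
    simp only [HH, SS, mul_zero, add_zero, Nat.cast_zero, zero_add, one_mul]
    refine mul_le_of_le_one_left bot_le ?_
    rw [ENNReal.ofReal_le_one, Real.exp_neg, ← div_eq_mul_inv, div_le_one (Real.exp_pos _)]
    linarith [Real.add_one_le_exp M]
  | succ j ih =>
    intro M y' hy'
    simp only [HH, SS]
    have hK := KK_measurable_left δ y'
    have hS := SS_measurable δ m j
    have hH := HH_measurable δ m j
    have hK2 := KK_measurable_right ((j + 1) * δ) (1/2)
    rw [← lintegral_const_mul _ (by fun_prop), ← lintegral_add_left (by fun_prop)]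
    have e : ((j + 1 : ℕ) + 1 : ℝ) * δ = (j + 1) * δ + δ := by push_cast; ring
    rw [e, ← KK_CK (by positivity) hδ (by norm_num) hy'.le, ← lintegral_const_mul _ (by fun_prop)]
    refine setLIntegral_mono' measurableSet_Ioi fun y (hy : 0 < y) => ?_
    set ε := m j - m (j + 1)
    have := ih (M - ε * y) y hy
    have h1 := mul_le_mul_right this (ENNReal.ofReal (Real.exp (-(ε * y))))
    rw [mul_add, ← mul_assoc, ← mul_assoc, ← ENNReal.ofReal_mul (Real.exp_pos _).le,
      ← ENNReal.ofReal_mul (Real.exp_pos _).le, ← Real.exp_add, mul_left_comm, ← Real.exp_add,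
      show -(ε * y) + -(M - ε * y) = -M by ring] at h1
    have h2 : ENNReal.ofReal ((1 + M) * Real.exp (-M)) ≤
        ENNReal.ofReal ((1 + (M - ε * y)) * Real.exp (-M))
        + ENNReal.ofReal (Real.exp (-M)) * ENNReal.ofReal (ε * y) := by
      rw [← ENNReal.ofReal_mul (Real.exp_pos _).le]
      refine le_trans (ENNReal.ofReal_le_ofReal (le_of_eq ?_)) ENNReal.ofReal_add_le
      ring
    calc _ = ENNReal.ofReal ((1 + M) * Real.exp (-M)) * KK ((j + 1) * δ) (1/2) y * KK δ y y' := by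
          ring
      _ ≤ ((ENNReal.ofReal ((1 + (M - ε * y)) * Real.exp (-M))
        + ENNReal.ofReal (Real.exp (-M)) * ENNReal.ofReal (ε * y)) * KK ((j + 1) * δ) (1/2) y)
          * KK δ y y' := by gcongr
      _ = (ENNReal.ofReal ((1 + (M - ε * y)) * Real.exp (-M)) * KK ((j + 1) * δ) (1/2) y
        + ENNReal.ofReal (Real.exp (-M)) * ENNReal.ofReal (ε * y) * KK ((j + 1) * δ) (1/2) y)
          * KK δ y y' := by ring
      _ ≤ ((ENNReal.ofReal (Real.exp (-(ε * y))) * HH δ m j y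
            + ENNReal.ofReal (Real.exp (-M)) * SS δ m j y)
        + ENNReal.ofReal (Real.exp (-M)) * ENNReal.ofReal (ε * y) * KK ((j + 1) * δ) (1/2) y)
          * KK δ y y' := by gcongr
      _ = _ := by ring

lemma SS_eq {δ : ℝ} (hδ : 0 < δ) (m : ℕ → ℝ) (hm : ∀ i, m (i + 1) ≤ m i) (j : ℕ) :
    ∀ y : ℝ, 0 < y → SS δ m j y = ∑ i ∈ Finset.range j, ENNReal.ofReal (m i - m (i + 1)) *
      JJ ((i + 1) * δ) ((j - i) * δ) (1/2) y := by
  induction j with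
  | zero => intro y _; simp [SS]
  | succ j ih =>
    intro y' hy'
    have hK := KK_measurable_left δ y'
    have hK2 := KK_measurable_right ((j + 1) * δ) (1/2)
    have hJ : ∀ s t, Measurable (JJ s t (1/2)) := fun s t => JJ_measurable s t _
    rw [Finset.sum_range_succ]
    simp only [SS]
    have e : ∫⁻ y in Set.Ioi 0, (SS δ m j y +
        ENNReal.ofReal ((m j - m (j + 1)) * y) * KK ((j + 1) * δ) (1/2) y) * KK δ y y'
      = ∫⁻ y in Set.Ioi 0, ((∑ i ∈ Finset.range j, ENNReal.ofReal (m i - m (i + 1)) *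
        (JJ ((i + 1) * δ) ((j - i) * δ) (1/2) y * KK δ y y')) +
        ENNReal.ofReal (m j - m (j + 1)) * (KK ((j + 1) * δ) (1/2) y * ENNReal.ofReal y *
          KK δ y y')) := by
      refine setLIntegral_congr_fun measurableSet_Ioi fun y (hy : 0 < y) => ?_
      rw [ih y hy, ENNReal.ofReal_mul (sub_nonneg.2 (hm j)), add_mul, Finset.sum_mul]
      congr 1
      · exact Finset.sum_congr rfl fun i _ => by ring
      · ring
    rw [e, lintegral_add_right _ (by fun_prop), lintegral_finsetSum _ (fun i _ => by fun_prop),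
      lintegral_const_mul _ (by fun_prop)]
    congr 1
    · refine Finset.sum_congr rfl fun i hi => ?_
      have hij : (i : ℝ) < j := by exact_mod_cast Finset.mem_range.1 hi
      rw [lintegral_const_mul _ (by fun_prop), JJ_CK (mul_pos (by linarith) hδ) hδ hy'.le]
      congr 2
      push_cast; ring
    · congr 1
      unfold JJ
      congr 2
      push_cast; ring_nf

/-- lower bound of the weighted kernel -/
lemma HH_ge : ∃ C : ℝ, 0 ≤ C ∧ ∀ (δ : ℝ) (m : ℕ → ℝ) (j : ℕ) (M : ℝ), 0 < δ →
    (∀ i, m (i + 1) ≤ m i) → 1 ≤ (j + 1) * δ →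
    (∑ i ∈ Finset.range j, (m i - m (i + 1)) *
      (C * (1 + Real.sqrt (((i + 1) * δ) * ((j - i) * δ) / ((j + 1) * δ)))) ≤ M) →
    ∀ z : ℝ, 1/2 ≤ z → z ≤ 1 →
      ENNReal.ofReal (Real.exp (-M)) * KK ((j + 1) * δ) (1/2) z ≤ HH δ m j z := by
  obtain ⟨C, hC, hJ⟩ := JJ_le
  refine ⟨C, hC, fun δ m j M hδ hm hj hM z hz hz1 => ?_⟩
  have hM0 : 0 ≤ M := le_trans (Finset.sum_nonneg fun i _ =>
    mul_nonneg (sub_nonneg.2 (hm i)) (by positivity)) hM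
  have hS : SS δ m j z ≤ ENNReal.ofReal M * KK ((j + 1) * δ) (1/2) z := by
    rw [SS_eq hδ m hm j z (by linarith)]
    refine le_trans ?_ (mul_le_mul_left (ENNReal.ofReal_le_ofReal hM) _)
    rw [ENNReal.ofReal_sum_of_nonneg (fun i _ =>
      mul_nonneg (sub_nonneg.2 (hm i)) (by positivity)), Finset.sum_mul]
    refine Finset.sum_le_sum fun i hi => ?_
    have hij : (i : ℝ) < j := by exact_mod_cast Finset.mem_range.1 hi
    rw [ENNReal.ofReal_mul (sub_nonneg.2 (hm i)), mul_assoc]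
    have e : (i + 1) * δ + (j - i) * δ = (j + 1) * δ := by ring
    have := hJ ((i + 1) * δ) ((j - i) * δ) (by positivity) (mul_pos (by linarith) hδ)
      (by rw [e]; exact hj) z hz hz1
    rw [e] at this
    gcongr
  have h := jensen hδ m j M z (by linarith)
  have hfin : ENNReal.ofReal (Real.exp (-M)) * (ENNReal.ofReal M * KK ((j + 1) * δ) (1/2) z) ≠ ⊤ := by
    unfold KK
    exact ENNReal.mul_ne_top ENNReal.ofReal_ne_top
      (ENNReal.mul_ne_top ENNReal.ofReal_ne_top ENNReal.ofReal_ne_top)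
  refine (ENNReal.add_le_add_iff_right hfin).1 ?_
  refine le_trans (le_of_eq ?_) (h.trans (add_le_add_right (mul_le_mul_right hS _) _))
  rw [← mul_assoc, ← add_mul, ← ENNReal.ofReal_mul (Real.exp_pos _).le,
    ← ENNReal.ofReal_add (Real.exp_pos _).le (mul_nonneg (Real.exp_pos _).le hM0)]
  congr 2; ring

end

end BBLog

open MeasureTheory ProbabilityTheory

namespace BBLog

noncomputable section

lemma preBM {Ω : Type*} [MeasurableSpace Ω]
    (P : Measure Ω) [IsProbabilityMeasure P] (B : ℝ → Ω → ℝ)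
    (hmeas : ∀ t, Measurable (B t))
    (hgauss : ∀ (k : ℕ) (t : Fin k → ℝ), (∀ i, 0 ≤ t i) → ∀ a : Fin k → ℝ,
      Measure.map (fun ω => ∑ i, a i * B (t i) ω) P
        = gaussianReal 0 (Real.toNNReal (∑ i, ∑ j, a i * a j * min (t i) (t j)))) :
    IsPreBrownianReal (fun t : NNReal => B t) P := by
  have hG : IsGaussianProcess (fun t : NNReal => B t) P := by
    refine ⟨fun I => ⟨isGaussian_of_map_eq_gaussianReal fun L => ?_⟩⟩
    have hm : Measurable fun ω => I.restrict (fun t : NNReal => B t ω) :=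
      measurable_pi_lambda _ fun i => hmeas _
    let e := I.equivFin.symm
    have h := hgauss I.card (fun i => ((e i : I) : NNReal)) (fun i => NNReal.coe_nonneg _)
      (fun i => L (Pi.single (e i) 1))
    refine ⟨0, _, Eq.trans ?_ h⟩
    rw [Measure.map_map (by fun_prop) hm]
    congr 1
    funext ω
    simp only [Function.comp]
    have : I.restrict (fun t : NNReal => B t ω)
        = ∑ i : I, (B (i : NNReal) ω) • (Pi.single i (1 : ℝ) : I → ℝ) := by
      rw [pi_eq_sum_univ' (I.restrict (fun t : NNReal => B t ω))]
      refine Finset.sum_congr rfl fun i _ => ?_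
      congr 1
    rw [this, map_sum, ← e.sum_comp]
    refine Finset.sum_congr rfl fun i _ => ?_
    rw [map_smul, smul_eq_mul, mul_comm]
  have law1 : ∀ t : NNReal, HasLaw (B t) (gaussianReal 0 t) P := by
    intro t
    refine ⟨(hmeas _).aemeasurable, ?_⟩
    have := hgauss 1 (fun _ => t) (fun _ => t.2) (fun _ => 1)
    simpa using this
  have law2 : ∀ s t : NNReal, s ≤ t → HasLaw (B s - B t) (gaussianReal 0 (t - s)) P := by
    intro s t hst
    refine ⟨((hmeas _).sub (hmeas _)).aemeasurable, ?_⟩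
    have := hgauss 2 ![(s : ℝ), t] (fun i => by fin_cases i <;> simp) ![1, -1]
    have e : (fun ω => ∑ i, (![1, -1] : Fin 2 → ℝ) i * B ((![(s : ℝ), t] : Fin 2 → ℝ) i) ω)
        = B s - B t := by
      funext ω; simp [Fin.sum_univ_two]; ring
    rw [e] at this
    rw [this]
    congr 1
    have h2 : (s : ℝ) ≤ t := by exact_mod_cast hst
    rw [← NNReal.coe_inj, Real.coe_toNNReal]
    · simp [Fin.sum_univ_two, h2, NNReal.coe_sub hst]; ring
    · simp [Fin.sum_univ_two, h2]
  refine hG.isPreBrownianReal_of_covariance (fun t => ?_) (fun s t hst => ?_)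
  · rw [(law1 t).integral_eq, integral_id_gaussianReal]
  · have hs := (hG.hasGaussianLaw_eval s).memLp_two
    have ht := (hG.hasGaussianLaw_eval t).memLp_two
    have h := variance_sub hs ht
    have v1 : Var[fun x => B s x ; P] = s := by
      have := (law1 s).variance_eq; rw [this]; simp
    have v2 : Var[fun x => B t x ; P] = t := by
      have := (law1 t).variance_eq; rw [this]; simp
    have v3 : Var[B s - B t ; P] = (t - s : ℝ) := by
      have := (law2 s t hst).variance_eq; rw [this]; simp [NNReal.coe_sub hst]
    have h' : (t - s : ℝ) = s - 2 * cov[fun x => B s x, fun x => B t x; P] + t := by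
      rw [v3] at h
      exact h.trans (congrArg₂ (· + ·) (congrArg (· - _) v1) v2)
    show cov[fun x => B s x, fun x => B t x; P] = s
    linarith

def hh (δ : ℝ) (m : ℕ → ℝ) (k : ℕ) : ℝ := δ * ∑ i ∈ Finset.range k, m i

def YY {Ω : Type*} (B : ℝ → Ω → ℝ) (δ : ℝ) (m : ℕ → ℝ) (k : ℕ) (ω : Ω) : ℝ :=
  1/2 - hh δ m k - B (k * δ) ω

def EE {Ω : Type*} (B : ℝ → Ω → ℝ) (δ : ℝ) (m : ℕ → ℝ) (k : ℕ) : Set Ω :=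
  {ω | ∀ i ∈ Finset.range (k + 1), 0 < YY B δ m i ω}

lemma lintegral_gauss_sub {δ : ℝ} (hδ : 0 < δ) (c : ℝ) {G : ℝ → ENNReal} (hG : Measurable G) :
    ∫⁻ z, G (c - z) ∂(gaussianReal 0 δ.toNNReal) = ∫⁻ y, G y * ENNReal.ofReal (pk δ (y - c)) := by
  have hv' : δ.toNNReal ≠ 0 := by simpa using hδ
  have hmap : (gaussianReal 0 δ.toNNReal).map (fun z => c - z) = gaussianReal c δ.toNNReal := by
    have e : (fun g : ℝ => c - g) = (fun x => c + x) ∘ (fun g => -g) := by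
      funext x; simp [sub_eq_add_neg]
    rw [e, ← Measure.map_map (by fun_prop) (by fun_prop), gaussianReal_map_neg,
      gaussianReal_map_const_add]
    simp
  rw [← lintegral_map (f := G) hG (by fun_prop), hmap, gaussianReal_of_var_ne_zero _ hv',
    lintegral_withDensity_eq_lintegral_mul _ (measurable_gaussianPDF _ _) hG]
  refine lintegral_congr fun w => ?_
  rw [Pi.mul_apply, gaussianPDF, ← pk_eq hδ.le, mul_comm]

section
variable {Ω : Type*} [MeasurableSpace Ω] {P : Measure Ω} [IsProbabilityMeasure P] {B : ℝ → Ω → ℝ}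

lemma YY_measurable (hmeas : ∀ t, Measurable (B t)) (δ : ℝ) (m : ℕ → ℝ) (k : ℕ) :
    Measurable (YY B δ m k) := by
  have := hmeas (k * δ)
  unfold YY; fun_prop

lemma EE_measurable (hmeas : ∀ t, Measurable (B t)) (δ : ℝ) (m : ℕ → ℝ) (k : ℕ) :
    MeasurableSet (EE B δ m k) := by
  have : EE B δ m k = ⋂ i ∈ Finset.range (k + 1), {ω | 0 < YY B δ m i ω} := by
    ext ω; simp [EE]
  rw [this]
  exact Finset.measurableSet_biInter _ fun i _ =>
    measurableSet_lt measurable_const (YY_measurable hmeas δ m i)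

lemma EE_succ (δ : ℝ) (m : ℕ → ℝ) (k : ℕ) :
    EE B δ m (k + 1) = EE B δ m k ∩ {ω | 0 < YY B δ m (k + 1) ω} := by
  ext ω
  simp only [EE, Set.mem_ofPred_eq, Finset.mem_range, Set.mem_inter_iff]
  constructor
  · intro h; exact ⟨fun i hi => h i (by omega), h _ (by omega)⟩
  · rintro ⟨h1, h2⟩ i hi
    rcases Nat.lt_succ_iff_lt_or_eq.1 hi with h | rfl
    · exact h1 i h
    · exact h2

lemma step (hmeas : ∀ t, Measurable (B t)) (hB : IsPreBrownianReal (fun t : NNReal => B t) P)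
    {δ : ℝ} (hδ : 0 < δ) (m : ℕ → ℝ) (k : ℕ) {g : ℝ → ENNReal} (hg : Measurable g) :
    ∫⁻ ω in EE B δ m (k + 1), g (YY B δ m (k + 1) ω) ∂P
      = ∫⁻ ω in EE B δ m k, (∫⁻ y' in Set.Ioi 0,
          g y' * ENNReal.ofReal (pk δ (y' - (YY B δ m k ω - δ * m k)))) ∂P := by
  set Z : Ω → ℝ := fun ω => B (k * δ + δ) ω - B (k * δ) ω with hZ
  have hZm : Measurable Z := (hmeas _).sub (hmeas _)
  set t₀ : NNReal := ⟨k * δ, by positivity⟩ with ht₀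
  set d : NNReal := ⟨δ, hδ.le⟩ with hd
  have hlaw : P.map Z = gaussianReal 0 δ.toNNReal := by
    have h := ((hB.shift t₀).hasLaw_eval d).map_eq
    have e : δ.toNNReal = d := Real.toNNReal_of_nonneg hδ.le
    rw [e, ← h]; rfl
  set U : Ω → ENNReal × ℝ := fun ω => ((EE B δ m k).indicator 1 ω, YY B δ m k ω) with hU
  have hUm : Measurable U :=
    (measurable_one.indicator (EE_measurable hmeas δ m k)).prodMk (YY_measurable hmeas δ m k)
  have hind : IndepFun U Z P := by
    have h0 := (hB.indepFun_shift t₀).symm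
    have hmem : ∀ i : ℕ, i < k + 1 → (⟨i * δ, by positivity⟩ : NNReal) ∈ Set.Iic t₀ := by
      intro i hi
      show (i * δ : ℝ) ≤ k * δ
      have : (i : ℝ) ≤ k := by exact_mod_cast Nat.lt_succ_iff.1 hi
      gcongr
    let y : (i : ℕ) → (i < k + 1) → (Set.Iic t₀ → ℝ) → ℝ := fun i hi x =>
      1/2 - hh δ m i - x ⟨_, hmem i hi⟩
    have hy : ∀ i hi, Measurable (y i hi) := fun i hi => by
      have := measurable_pi_apply (X := fun _ : Set.Iic t₀ => ℝ) ⟨_, hmem i hi⟩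
      fun_prop
    let S : Set (Set.Iic t₀ → ℝ) := ⋂ i : Fin (k + 1), {x | 0 < y i i.2 x}
    have hS : MeasurableSet S := MeasurableSet.iInter fun i =>
      measurableSet_lt measurable_const (hy i i.2)
    let φ : (Set.Iic t₀ → ℝ) → ENNReal × ℝ := fun x => (S.indicator 1 x, y k (by omega) x)
    have hφ : Measurable φ := (measurable_one.indicator hS).prodMk (hy k (by omega))
    let ψ : (NNReal → ℝ) → ℝ := fun x => x d
    have hψ : Measurable ψ := measurable_pi_apply _
    have h1 := h0.comp hφ hψ
    have eU : φ ∘ (fun ω (t : Set.Iic t₀) => B (t : NNReal) ω) = U := by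
      funext ω
      simp only [Function.comp, φ, hU]
      refine Prod.ext ?_ rfl
      simp only
      have : (fun t : Set.Iic t₀ => B (t : NNReal) ω) ∈ S ↔ ω ∈ EE B δ m k := by
        simp only [S, Set.mem_iInter, Set.mem_ofPred_eq, EE, Finset.mem_range, Fin.forall_iff]
        rfl
      by_cases h : ω ∈ EE B δ m k
      · rw [Set.indicator_of_mem h, Set.indicator_of_mem (this.2 h)]; rfl
      · rw [Set.indicator_of_notMem h, Set.indicator_of_notMem (fun h' => h (this.1 h'))]
    rw [eU] at h1
    exact h1
  have hprod := (indepFun_iff_map_prod_eq_prod_map_map hUm.aemeasurable hZm.aemeasurable).1 hind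
  set g' : ℝ → ENNReal := (Set.Ioi 0).indicator g with hg'
  have hg'm : Measurable g' := hg.indicator measurableSet_Ioi
  have hY : ∀ ω, YY B δ m (k + 1) ω = (YY B δ m k ω - δ * m k) - Z ω := by
    intro ω
    simp only [YY, hh, hZ, Finset.sum_range_succ]
    rw [show ((k + 1 : ℕ) : ℝ) * δ = k * δ + δ by push_cast; ring]
    ring
  let F : (ENNReal × ℝ) × ℝ → ENNReal := fun q => q.1.1 * g' ((q.1.2 - δ * m k) - q.2)
  have hF : Measurable F := by fun_prop
  have lhs : ∫⁻ ω in EE B δ m (k + 1), g (YY B δ m (k + 1) ω) ∂P = ∫⁻ ω, F (U ω, Z ω) ∂P := by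
    rw [← lintegral_indicator (EE_measurable hmeas _ _ _)]
    refine lintegral_congr fun ω => ?_
    simp only [F, hU, hg', ← hY]
    rw [EE_succ]
    by_cases h1 : ω ∈ EE B δ m k <;> by_cases h2 : 0 < YY B δ m (k + 1) ω <;>
      simp [h1, h2]
  rw [lhs, ← lintegral_map (f := F) hF (hUm.prodMk hZm), hprod,
    lintegral_prod _ hF.aemeasurable, lintegral_map hF.lintegral_prod_right' hUm,
    ← lintegral_indicator (EE_measurable hmeas _ _ _)]
  refine lintegral_congr fun ω => ?_
  simp only [F, hU, hlaw]
  by_cases h1 : ω ∈ EE B δ m k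
  · simp only [Set.indicator_of_mem h1, Pi.one_apply, one_mul]
    rw [lintegral_gauss_sub hδ _ hg'm, ← lintegral_indicator measurableSet_Ioi]
    refine lintegral_congr fun y => ?_
    by_cases hy : 0 < y <;> simp [hg', hy]
  · simp [h1]

end

end

end BBLog

open MeasureTheory ProbabilityTheory

namespace BBLog

noncomputable section

def VV (δ : ℝ) (m : ℕ → ℝ) (k : ℕ) : ℝ := ∑ i ∈ Finset.range k, m i ^ 2 * δ / 2

lemma pk_shift {δ : ℝ} (hδ : 0 < δ) (y y' a : ℝ) :
    pk δ (y' - (y - δ * a)) = pk δ (y' - y) * Real.exp (-(a * (y' - y)) - a ^ 2 * δ / 2) := by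
  unfold pk
  rw [mul_assoc (_)⁻¹, ← Real.exp_add]
  congr 2
  field_simp
  ring

lemma pk_sub_comm (t x y : ℝ) : pk t (x - y) = pk t (y - x) := by
  rw [← pk_neg, neg_sub]

section
variable {Ω : Type*} [MeasurableSpace Ω] {P : Measure Ω} [IsProbabilityMeasure P] {B : ℝ → Ω → ℝ}

lemma claim (hmeas : ∀ t, Measurable (B t)) (hB : IsPreBrownianReal (fun t : NNReal => B t) P)
    {δ : ℝ} (hδ : 0 < δ) (m : ℕ → ℝ) (hm0 : 0 ≤ m 0) (j : ℕ) :
    ∀ {g : ℝ → ENNReal}, Measurable g →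
    ∫⁻ y in Set.Ioi 0, g y * (ENNReal.ofReal (Real.exp (-(m j * y) - VV δ m (j + 1))) * HH δ m j y)
      ≤ ∫⁻ ω in EE B δ m (j + 1), g (YY B δ m (j + 1) ω) ∂P := by
  induction j with
  | zero =>
    intro g hg
    have h0 : ∀ᵐ ω ∂P, YY B δ m 0 ω = 1/2 := by
      filter_upwards [hB.eval_zero_ae_eq_zero] with ω h
      have h' : B 0 ω = 0 := h
      simp [YY, hh, h']
    have hE : ∀ᵐ ω ∂P, ω ∈ EE B δ m 0 := by
      filter_upwards [h0] with ω h
      simp [EE, h]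
    rw [step hmeas hB hδ m 0 hg, Measure.restrict_eq_self_of_ae_mem hE]
    have : ∫⁻ ω, (∫⁻ y' in Set.Ioi 0,
          g y' * ENNReal.ofReal (pk δ (y' - (YY B δ m 0 ω - δ * m 0)))) ∂P
        = ∫⁻ y' in Set.Ioi 0, g y' * ENNReal.ofReal (pk δ (y' - (1/2 - δ * m 0))) := by
      rw [lintegral_congr_ae (g := fun _ => ∫⁻ y' in Set.Ioi 0,
        g y' * ENNReal.ofReal (pk δ (y' - (1/2 - δ * m 0))))]
      · simp
      · filter_upwards [h0] with ω h
        rw [h]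
    rw [this]
    refine setLIntegral_mono' measurableSet_Ioi fun y (hy : 0 < y) => ?_
    gcongr
    simp only [HH, KK, VV]
    rw [← ENNReal.ofReal_mul (Real.exp_pos _).le, pk_shift hδ, mul_comm]
    refine ENNReal.ofReal_le_ofReal ?_
    have h1 := kd_le_pk δ (1/2) y
    rw [pk_sub_comm] at h1
    refine mul_le_mul h1 (Real.exp_le_exp.2 ?_) (Real.exp_pos _).le (pk_nonneg _ _)
    simp
    nlinarith
  | succ j ih =>
    intro g hg
    rw [step hmeas hB hδ m (j + 1) hg]
    have hpm : Measurable fun q : ℝ × ℝ =>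
        ENNReal.ofReal (pk δ (q.2 - (q.1 - δ * m (j + 1)))) := by
      have := (pk_continuous δ).measurable
      fun_prop
    have hgt : Measurable fun y : ℝ => ∫⁻ y' in Set.Ioi 0,
          g y' * ENNReal.ofReal (pk δ (y' - (y - δ * m (j + 1)))) := by
      apply Measurable.lintegral_prod_right' (f := fun q : ℝ × ℝ =>
        g q.2 * ENNReal.ofReal (pk δ (q.2 - (q.1 - δ * m (j + 1)))))
      fun_prop
    refine le_trans ?_ (ih hgt)
    have hH := HH_measurable δ m j
    have e1 : ∀ y : ℝ, (∫⁻ y' in Set.Ioi 0, g y' * ENNReal.ofReal (pk δ (y' - (y - δ * m (j + 1)))))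
        * (ENNReal.ofReal (Real.exp (-(m j * y) - VV δ m (j + 1))) * HH δ m j y)
        = ∫⁻ y' in Set.Ioi 0, g y' * ENNReal.ofReal (pk δ (y' - (y - δ * m (j + 1))))
          * (ENNReal.ofReal (Real.exp (-(m j * y) - VV δ m (j + 1))) * HH δ m j y) := by
      intro y
      rw [lintegral_mul_const]
      have := (pk_continuous δ).measurable
      fun_prop
    simp_rw [e1]
    rw [lintegral_lintegral_swap]
    · refine setLIntegral_mono' measurableSet_Ioi fun y' (hy' : 0 < y') => ?_
      simp_rw [mul_assoc (g y')]
      have hKl := KK_measurable_left δ y'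
      rw [lintegral_const_mul]
      swap
      · have := (pk_continuous δ).measurable
        fun_prop
      gcongr
      simp only [HH]
      rw [← lintegral_const_mul _ (by fun_prop)]
      refine setLIntegral_mono' measurableSet_Ioi fun y (hy : 0 < y) => ?_
      have key : ENNReal.ofReal (Real.exp (-(m (j + 1) * y') - VV δ m (j + 1 + 1)))
          * ENNReal.ofReal (Real.exp (-((m j - m (j + 1)) * y))) * KK δ y y' ≤
          ENNReal.ofReal (pk δ (y' - (y - δ * m (j + 1))))
          * ENNReal.ofReal (Real.exp (-(m j * y) - VV δ m (j + 1))) := by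
        unfold KK
        rw [← ENNReal.ofReal_mul (Real.exp_pos _).le, ← ENNReal.ofReal_mul (by positivity),
          ← ENNReal.ofReal_mul (pk_nonneg _ _), pk_shift hδ, ← Real.exp_add, mul_assoc,
          ← Real.exp_add, mul_comm]
        refine ENNReal.ofReal_le_ofReal ?_
        have h1 := kd_le_pk δ y y'
        rw [pk_sub_comm] at h1
        refine mul_le_mul h1 (le_of_eq ?_) (Real.exp_pos _).le (pk_nonneg _ _)
        congr 1
        unfold VV
        rw [Finset.sum_range_succ _ (j + 1)]
        ring
      calc _ = (ENNReal.ofReal (Real.exp (-(m (j + 1) * y') - VV δ m (j + 1 + 1)))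
          * ENNReal.ofReal (Real.exp (-((m j - m (j + 1)) * y))) * KK δ y y') * HH δ m j y := by ring
        _ ≤ (ENNReal.ofReal (pk δ (y' - (y - δ * m (j + 1))))
          * ENNReal.ofReal (Real.exp (-(m j * y) - VV δ m (j + 1)))) * HH δ m j y := by gcongr
        _ = _ := by ring
    · apply Measurable.aemeasurable
      simp only [Function.uncurry_def]
      fun_prop

end

end

end BBLog

open MeasureTheory ProbabilityTheory

namespace BBLog

noncomputable section

def gg (γ δ : ℝ) (i : ℕ) : ℝ := γ / (1 + i * δ)

def mm (γ δ : ℝ) (K i : ℕ) : ℝ := if i < K then gg γ δ i else -gg γ δ (2 * K - 1 - i)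

section
variable {γ δ : ℝ}

lemma gg_nonneg (hγ : 0 < γ) (hδ : 0 < δ) (i : ℕ) : 0 ≤ gg γ δ i := by
  unfold gg; positivity

lemma gg_anti (hγ : 0 < γ) (hδ : 0 < δ) {i j : ℕ} (h : i ≤ j) : gg γ δ j ≤ gg γ δ i := by
  have : (i : ℝ) ≤ j := by exact_mod_cast h
  unfold gg; gcongr

lemma mm_anti (hγ : 0 < γ) (hδ : 0 < δ) (K i : ℕ) : mm γ δ K (i + 1) ≤ mm γ δ K i := by
  unfold mm
  split_ifs with h1 h2 h2
  · exact gg_anti hγ hδ (by omega)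
  · omega
  · linarith [gg_nonneg hγ hδ i, gg_nonneg hγ hδ (2 * K - 1 - (i + 1))]
  · exact neg_le_neg (gg_anti hγ hδ (by omega))

lemma sum_mm (K : ℕ) : ∀ j ≤ K, ∑ i ∈ Finset.range (K + j), mm γ δ K i
    = ∑ i ∈ Finset.range (K - j), mm γ δ K i := by
  intro j
  induction j with
  | zero => simp
  | succ j ih =>
    intro hj
    rw [← add_assoc, Finset.sum_range_succ, ih (by omega)]
    have : K - j = (K - (j + 1)) + 1 := by omega
    rw [this, Finset.sum_range_succ]
    have e1 : mm γ δ K (K + j) = -gg γ δ (K - (j + 1)) := by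
      unfold mm
      rw [if_neg (by omega), show 2 * K - 1 - (K + j) = K - (j + 1) by omega]
    have e2 : mm γ δ K (K - (j + 1)) = gg γ δ (K - (j + 1)) := by
      unfold mm
      rw [if_pos (by omega)]
    rw [e1, e2]; ring

lemma log_le_G (hγ : 0 < γ) (hδ : 0 < δ) (K : ℕ) : ∀ k ≤ K,
    γ * Real.log (1 + k * δ) ≤ hh δ (mm γ δ K) k := by
  intro k
  induction k with
  | zero => simp [hh]
  | succ k ih =>
    intro hk
    have h := ih (by omega)
    unfold hh at h ⊢
    rw [Finset.sum_range_succ, mul_add]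
    have e : mm γ δ K k = γ / (1 + k * δ) := by unfold mm; rw [if_pos (by omega)]; rfl
    have hp : 0 < 1 + k * δ := by positivity
    have h2 : Real.log (1 + (k + 1 : ℕ) * δ) - Real.log (1 + k * δ) ≤ δ / (1 + k * δ) := by
      rw [← Real.log_div (by positivity) hp.ne']
      refine (Real.log_le_sub_one_of_pos (by positivity)).trans (le_of_eq ?_)
      field_simp
      push_cast; ring
    rw [e]
    have h3 := mul_le_mul_of_nonneg_left h2 hγ.le
    have e4 : γ * (δ / (1 + k * δ)) = δ * (γ / (1 + k * δ)) := by ring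
    linarith

lemma hh_ge (hγ : 0 < γ) (hδ : 0 < δ) (K k : ℕ) (hk : k ≤ 2 * K) :
    γ * Real.log (max (min (k * δ) (2 * K * δ - k * δ)) 1) ≤ hh δ (mm γ δ K) k := by
  have main : ∀ j ≤ K, ∀ s : ℝ, s ≤ j * δ →
      γ * Real.log (max s 1) ≤ hh δ (mm γ δ K) j := by
    intro j hj s hs
    refine le_trans ?_ (log_le_G hγ hδ K j hj)
    have : 0 ≤ j * δ := by positivity
    refine mul_le_mul_of_nonneg_left (Real.log_le_log (by positivity) ?_) hγ.le
    exact max_le (by linarith) (by linarith)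
  rcases le_total k K with h | h
  · exact main k h _ (min_le_left _ _)
  · obtain ⟨j, rfl⟩ := Nat.exists_eq_add_of_le h
    have e : hh δ (mm γ δ K) (K + j) = hh δ (mm γ δ K) (K - j) := by
      unfold hh; rw [sum_mm K j (by omega)]
    rw [e]
    refine main _ (by omega) _ ((min_le_right _ _).trans (le_of_eq ?_))
    rw [Nat.cast_sub (by omega)]; push_cast; ring

lemma hh_end (K : ℕ) : hh δ (mm γ δ K) (2 * K) = 0 := by
  unfold hh; rw [two_mul, sum_mm K K le_rfl]; simp

lemma VV_le (hγ : 0 < γ) (hδ : 0 < δ) (hδ1 : δ ≤ 1) (K : ℕ) :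
    VV δ (mm γ δ K) (2 * K) ≤ 2 * γ ^ 2 := by
  unfold VV
  rw [two_mul K, Finset.sum_range_add]
  have e1 : ∑ i ∈ Finset.range K, mm γ δ K i ^ 2 * δ / 2
      = ∑ i ∈ Finset.range K, gg γ δ i ^ 2 * δ / 2 := by
    refine Finset.sum_congr rfl fun i hi => ?_
    unfold mm; rw [if_pos (Finset.mem_range.1 hi)]
  have e2 : ∑ i ∈ Finset.range K, mm γ δ K (K + i) ^ 2 * δ / 2
      = ∑ i ∈ Finset.range K, gg γ δ i ^ 2 * δ / 2 := by
    rw [← Finset.sum_range_reflect]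
    refine Finset.sum_congr rfl fun i hi => ?_
    have := Finset.mem_range.1 hi
    unfold mm; rw [if_neg (by omega), neg_sq, show 2 * K - 1 - (K + (K - 1 - i)) = i by omega]
  rw [e1, e2, ← Finset.sum_add_distrib]
  have h : ∀ i : ℕ, gg γ δ i ^ 2 * δ / 2 + gg γ δ i ^ 2 * δ / 2
      ≤ (-(2 * γ ^ 2 / (1 + (i + 1 : ℕ) * δ))) - (-(2 * γ ^ 2 / (1 + i * δ))) := by
    intro i
    unfold gg
    have ha : 1 ≤ 1 + i * δ := by have : 0 ≤ i * δ := by positivity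
                                  linarith
    have hb : (1 + (i + 1 : ℕ) * δ) = (1 + i * δ) + δ := by push_cast; ring
    rw [hb]
    generalize 1 + i * δ = a at *
    have e : (-(2 * γ ^ 2 / (a + δ))) - (-(2 * γ ^ 2 / a)) = γ ^ 2 * δ * (2 / (a * (a + δ))) := by
      field_simp; ring
    have e' : (γ / a) ^ 2 * δ / 2 + (γ / a) ^ 2 * δ / 2 = γ ^ 2 * δ * (1 / (a ^ 2)) := by
      field_simp; ring
    rw [e, e']
    have : 1 / a ^ 2 ≤ 2 / (a * (a + δ)) := by
      rw [div_le_div_iff₀ (by positivity) (by positivity)]; nlinarith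
    gcongr
  refine (Finset.sum_le_sum fun i _ => h i).trans ?_
  rw [Finset.sum_range_sub (fun i : ℕ => -(2 * γ ^ 2 / (1 + i * δ)))]
  have : 0 ≤ 2 * γ ^ 2 / (1 + K * δ) := by positivity
  simp
  linarith

lemma diff_le (hγ : 0 < γ) (hδ : 0 < δ) (hδ1 : δ ≤ 1) (r : ℕ) :
    (gg γ δ r - gg γ δ (r + 1)) * (1 + Real.sqrt ((r + 1) * δ))
      ≤ (-(6 * γ / Real.sqrt (1 + (r + 1 : ℕ) * δ))) - (-(6 * γ / Real.sqrt (1 + r * δ))) := by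
  unfold gg
  have ha : 1 ≤ 1 + r * δ := by have : 0 ≤ r * δ := by positivity
                                linarith
  have hb : (1 + (r + 1 : ℕ) * δ) = (1 + r * δ) + δ := by push_cast; ring
  have hb' : (r + 1) * δ = (1 + r * δ) + δ - 1 := by push_cast; ring
  rw [hb, hb']
  generalize 1 + r * δ = a at *
  have hu : 0 < Real.sqrt a := Real.sqrt_pos.2 (by linarith)
  have hv : 0 < Real.sqrt (a + δ) := Real.sqrt_pos.2 (by linarith)
  have hu2 : Real.sqrt a ^ 2 = a := Real.sq_sqrt (by linarith)
  have hv2 : Real.sqrt (a + δ) ^ 2 = a + δ := Real.sq_sqrt (by linarith)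
  have hw : Real.sqrt (a + δ - 1) ≤ Real.sqrt (a + δ) := Real.sqrt_le_sqrt (by linarith)
  have h1 : 1 ≤ Real.sqrt (a + δ) := Real.one_le_sqrt.2 (by linarith)
  generalize Real.sqrt (a + δ - 1) = w at *
  generalize Real.sqrt a = u at *
  generalize Real.sqrt (a + δ) = v at *
  have ha0 : 0 < a := by linarith
  have hv2u : v ≤ 2 * u := by nlinarith
  have huv : u ≤ v := by nlinarith
  calc (γ / a - γ / (a + δ)) * (1 + w) = γ * (δ / (a * (a + δ))) * (1 + w) := by field_simp; ring
    _ ≤ γ * (δ / (a * (a + δ))) * (2 * v) := by gcongr; linarith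
    _ = 2 * γ * ((v ^ 2 - u ^ 2) / (u ^ 2 * v)) := by
      rw [hu2, show v ^ 2 - a = δ by linarith, ← hv2]; field_simp
    _ ≤ 2 * γ * (3 * (v - u) / (u * v)) := by
      gcongr 2 * γ * ?_
      rw [div_le_div_iff₀ (by positivity) (by positivity)]
      have : (v ^ 2 - u ^ 2) ≤ 3 * (v - u) * u := by nlinarith
      have := mul_le_mul_of_nonneg_right this (by positivity : 0 ≤ u * v)
      nlinarith
    _ = _ := by field_simp; ring

lemma sum_diff_le (hγ : 0 < γ) (hδ : 0 < δ) (hδ1 : δ ≤ 1) (L : ℕ) :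
    ∑ r ∈ Finset.range L, (gg γ δ r - gg γ δ (r + 1)) * (1 + Real.sqrt ((r + 1) * δ)) ≤ 6 * γ := by
  refine (Finset.sum_le_sum fun i _ => diff_le hγ hδ hδ1 i).trans ?_
  rw [Finset.sum_range_sub (fun i : ℕ => -(6 * γ / Real.sqrt (1 + i * δ)))]
  have : 0 ≤ 6 * γ / Real.sqrt (1 + L * δ) := by positivity
  simp
  linarith

lemma sq_weight {a b c : ℝ} (ha : 0 ≤ a) (hb : 0 ≤ b) (hc : 0 < c) (h : b ≤ c) :
    Real.sqrt (a * b / c) ≤ Real.sqrt a := by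
  refine Real.sqrt_le_sqrt ?_
  rw [div_le_iff₀ hc]; gcongr

lemma MM_le (hγ : 0 < γ) (hδ : 0 < δ) (hδ1 : δ ≤ 1) {C : ℝ} (hC : 0 ≤ C) (L : ℕ) :
    ∑ i ∈ Finset.range (2 * L + 1), (mm γ δ (L + 1) i - mm γ δ (L + 1) (i + 1)) *
      (C * (1 + Real.sqrt (((i + 1) * δ) * (((2 * L + 1 : ℕ) - i) * δ) / (((2 * L + 1 : ℕ) + 1) * δ))))
      ≤ C * (18 * γ) := by
  have e0 : 2 * L + 1 = (L + 1) + L := by omega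
  have hc : 0 < (((2 * L + 1 : ℕ) : ℝ) + 1) * δ := by positivity
  rw [Finset.sum_congr rfl (fun i _ => mul_left_comm _ C _), ← Finset.mul_sum]
  refine mul_le_mul_of_nonneg_left ?_ hC
  generalize hcc : (((2 * L + 1 : ℕ) : ℝ) + 1) * δ = c at *
  conv_lhs => rw [e0]
  rw [Finset.sum_range_add, Finset.sum_range_succ]
  have p1 : ∑ i ∈ Finset.range L, (mm γ δ (L + 1) i - mm γ δ (L + 1) (i + 1)) *
      (1 + Real.sqrt (((i + 1) * δ) * (((L + 1 + L : ℕ) - i) * δ) / c)) ≤ 6 * γ := by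
    refine le_trans (Finset.sum_le_sum fun i hi => ?_) (sum_diff_le hγ hδ hδ1 L)
    have hi := Finset.mem_range.1 hi
    have hi' : (i : ℝ) < L := by exact_mod_cast hi
    have e1 : mm γ δ (L + 1) i = gg γ δ i := by unfold mm; rw [if_pos (by omega)]
    have e2 : mm γ δ (L + 1) (i + 1) = gg γ δ (i + 1) := by unfold mm; rw [if_pos (by omega)]
    rw [e1, e2]
    refine mul_le_mul_of_nonneg_left ?_ (sub_nonneg.2 (gg_anti hγ hδ (by omega)))
    refine add_le_add_right (sq_weight (by positivity) ?_ hc ?_) _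
    · refine mul_nonneg ?_ hδ.le
      push_cast; linarith [(Nat.cast_nonneg L : (0:ℝ) ≤ L)]
    · rw [← hcc]
      gcongr
      push_cast; linarith [(Nat.cast_nonneg i : (0:ℝ) ≤ i)]
  have p2 : (mm γ δ (L + 1) L - mm γ δ (L + 1) (L + 1)) *
      (1 + Real.sqrt (((L + 1) * δ) * (((L + 1 + L : ℕ) - L) * δ) / c)) ≤ 6 * γ := by
    have e1 : mm γ δ (L + 1) L = gg γ δ L := by unfold mm; rw [if_pos (by omega)]
    have e2 : mm γ δ (L + 1) (L + 1) = - gg γ δ L := by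
      unfold mm; rw [if_neg (by omega), show 2 * (L + 1) - 1 - (L + 1) = L by omega]
    rw [e1, e2]
    have h1 : Real.sqrt (((L + 1) * δ) * (((L + 1 + L : ℕ) - L) * δ) / c) ≤ Real.sqrt ((L + 1) * δ) := by
      refine sq_weight (by positivity) ?_ hc ?_
      · refine mul_nonneg ?_ hδ.le
        push_cast; linarith [(Nat.cast_nonneg L : (0:ℝ) ≤ L)]
      · rw [← hcc]
        gcongr
        push_cast; linarith [(Nat.cast_nonneg L : (0:ℝ) ≤ L)]
    have h2 : Real.sqrt ((L + 1) * δ) ≤ 1 + (L + 1) * δ := by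
      rw [Real.sqrt_le_left (by positivity)]
      have : 0 ≤ (L + 1) * δ := by positivity
      nlinarith
    have h3 : 0 ≤ L * δ := by positivity
    have h4 : 1 + Real.sqrt (((L + 1) * δ) * (((L + 1 + L : ℕ) - L) * δ) / c) ≤ 3 * (1 + L * δ) := by
      nlinarith
    have h5 : gg γ δ L * (1 + L * δ) = γ := by unfold gg; field_simp
    have h6 := mul_le_mul_of_nonneg_left h4 (gg_nonneg hγ hδ L)
    nlinarith
  have p3 : ∑ i ∈ Finset.range L, (mm γ δ (L + 1) (L + 1 + i) - mm γ δ (L + 1) (L + 1 + i + 1)) *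
      (1 + Real.sqrt ((((L + 1 + i : ℕ) + 1) * δ) * (((L + 1 + L : ℕ) - (L + 1 + i : ℕ)) * δ) / c)) ≤ 6 * γ := by
    rw [← Finset.sum_range_reflect]
    refine le_trans (Finset.sum_le_sum fun i hi => ?_) (sum_diff_le hγ hδ hδ1 L)
    have hi := Finset.mem_range.1 hi
    have hi' : (i : ℝ) < L := by exact_mod_cast hi
    have e1 : mm γ δ (L + 1) (L + 1 + (L - 1 - i)) = - gg γ δ (i + 1) := by
      unfold mm
      rw [if_neg (by omega), show 2 * (L + 1) - 1 - (L + 1 + (L - 1 - i)) = i + 1 by omega]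
    have e2 : mm γ δ (L + 1) (L + 1 + (L - 1 - i) + 1) = - gg γ δ i := by
      unfold mm
      rw [if_neg (by omega), show 2 * (L + 1) - 1 - (L + 1 + (L - 1 - i) + 1) = i by omega]
    rw [e1, e2, show -gg γ δ (i + 1) - -gg γ δ i = gg γ δ i - gg γ δ (i + 1) by ring]
    refine mul_le_mul_of_nonneg_left ?_ (sub_nonneg.2 (gg_anti hγ hδ (by omega)))
    have e3 : ((L + 1 + (L - 1 - i) : ℕ) : ℝ) = 2 * L - i := by
      have : L + 1 + (L - 1 - i) + i = 2 * L := by omega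
      have : ((L + 1 + (L - 1 - i) : ℕ) : ℝ) + i = 2 * L := by exact_mod_cast this
      linarith
    rw [e3, mul_comm ((2 * (L : ℝ) - i + 1) * δ),
      show (((L + 1 + L : ℕ) : ℝ) - (2 * L - i)) = i + 1 by push_cast; ring]
    refine add_le_add_right (sq_weight (by positivity) ?_ hc ?_) _
    · exact mul_nonneg (by linarith) hδ.le
    · rw [← hcc]
      gcongr
      push_cast; linarith [(Nat.cast_nonneg i : (0:ℝ) ≤ i)]
  linarith

end

end

end BBLog

open MeasureTheory ProbabilityTheory

namespace BBLog

noncomputable section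

lemma pk_ge {T : ℝ} (hT : 1 ≤ T) {z : ℝ} (hz : 1/2 ≤ z) (hz1 : z ≤ 1) :
    pk T 0 * Real.exp (-(1/8)) ≤ pk T (1/2 - z) := by
  unfold pk
  rw [mul_assoc, ← Real.exp_add]
  refine mul_le_mul_of_nonneg_left (Real.exp_le_exp.2 ?_) (by positivity)
  have : (1/2 - z) ^ 2 / (2 * T) ≤ 1/8 := by
    rw [div_le_iff₀ (by positivity)]; nlinarith
  have e : -(0 : ℝ) ^ 2 / (2 * T) = 0 := by simp
  rw [e, neg_div]
  linarith

lemma pk_le (T x : ℝ) (hT : 0 < T) : pk T x ≤ pk T 0 := by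
  unfold pk
  refine mul_le_mul_of_nonneg_left (Real.exp_le_exp.2 ?_) (by positivity)
  have : 0 ≤ x ^ 2 / (2 * T) := by positivity
  rw [neg_div]; simp; linarith

section
variable {Ω : Type*} [MeasurableSpace Ω] {P : Measure Ω} [IsProbabilityMeasure P] {B : ℝ → Ω → ℝ}

lemma grid_joint (hmeas : ∀ t, Measurable (B t))
    (hB : IsPreBrownianReal (fun t : NNReal => B t) P) {γ : ℝ} (hγ : 0 < γ) :
    ∃ κ : ℝ, 0 < κ ∧ ∀ (δ : ℝ) (L : ℕ), 0 < δ → δ ≤ 1 → ∀ T : ℝ, T = ((2 * L + 1 : ℕ) + 1) * δ →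
      1 ≤ T →
      ENNReal.ofReal (κ / T) * ENNReal.ofReal (pk T 0 * (1/2))
        ≤ P (EE B δ (mm γ δ (L + 1)) (2 * L + 1 + 1) ∩
            {ω | YY B δ (mm γ δ (L + 1)) (2 * L + 1 + 1) ω ∈ Set.Icc (1/2) 1}) := by
  obtain ⟨C, hC, hH⟩ := HH_ge
  refine ⟨Real.exp (-(2 * γ ^ 2) - C * (18 * γ) - 1/8) / 4, by positivity,
    fun δ L hδ hδ1 T hT hT1 => ?_⟩
  have hT0 : 0 < T := by linarith
  set m := mm γ δ (L + 1) with hm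
  have hm0 : 0 ≤ m 0 := by
    rw [hm]; unfold mm; rw [if_pos (by omega)]; exact gg_nonneg hγ hδ _
  have hmend : m (2 * L + 1) ≤ 0 := by
    rw [hm]; unfold mm; rw [if_neg (by omega)]; linarith [gg_nonneg hγ hδ (2 * (L + 1) - 1 - (2 * L + 1))]
  have hcl := claim hmeas hB hδ m hm0 (2 * L + 1) (g := (Set.Icc (1/2) 1).indicator 1)
    (measurable_one.indicator measurableSet_Icc)
  have hYm := YY_measurable hmeas δ m (2 * L + 1 + 1)
  have e1 : ∫⁻ ω in EE B δ m (2 * L + 1 + 1), (Set.Icc (1/2 : ℝ) 1).indicator (1 : ℝ → ENNReal)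
      (YY B δ m (2 * L + 1 + 1) ω) ∂P = P (EE B δ m (2 * L + 1 + 1) ∩
            {ω | YY B δ m (2 * L + 1 + 1) ω ∈ Set.Icc (1/2) 1}) := by
    have hs : MeasurableSet {ω | YY B δ m (2 * L + 1 + 1) ω ∈ Set.Icc (1/2 : ℝ) 1} :=
      hYm measurableSet_Icc
    rw [Set.inter_comm, ← Measure.restrict_apply hs, ← lintegral_indicator_one hs]
    rfl
  rw [e1] at hcl
  refine le_trans ?_ hcl
  have hV : VV δ m (2 * L + 1 + 1) ≤ 2 * γ ^ 2 := VV_le hγ hδ hδ1 (L + 1)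
  have hHL := hH δ m (2 * L + 1) (C * (18 * γ)) hδ (mm_anti hγ hδ (L + 1))
    (by rw [← hT]; exact hT1) (MM_le hγ hδ hδ1 hC L)
  rw [← hT] at hHL
  set κ := Real.exp (-(2 * γ ^ 2) - C * (18 * γ) - 1/8) / 4 with hκ
  have hsub : Set.Icc (1/2 : ℝ) 1 ⊆ Set.Ioi 0 := fun x hx => lt_of_lt_of_le (by norm_num) hx.1
  refine le_trans ?_ (lintegral_mono_set hsub)
  have e2 : ENNReal.ofReal (κ / T) * ENNReal.ofReal (pk T 0 * (1/2))
      = ∫⁻ y in Set.Icc (1/2 : ℝ) 1, ENNReal.ofReal (κ / T * pk T 0) := by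
    rw [setLIntegral_const, Real.volume_Icc, ← ENNReal.ofReal_mul (by positivity),
      ← ENNReal.ofReal_mul (mul_nonneg (by positivity) (pk_nonneg _ _))]
    congr 1; ring
  rw [e2]
  refine setLIntegral_mono' measurableSet_Icc fun y hy => ?_
  rw [Set.indicator_of_mem hy, Pi.one_apply, one_mul]
  have h1 := hHL y hy.1 hy.2
  refine le_trans ?_ (mul_le_mul_right h1 _)
  unfold KK
  rw [← ENNReal.ofReal_mul (Real.exp_pos _).le, ← ENNReal.ofReal_mul (Real.exp_pos _).le]
  refine ENNReal.ofReal_le_ofReal ?_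
  have k1 := kd_ge hT1 hy.1 hy.2
  have k2 := pk_ge hT1 hy.1 hy.2
  have k3 : Real.exp (-(2 * γ ^ 2)) ≤ Real.exp (-(m (2 * L + 1) * y) - VV δ m (2 * L + 1 + 1)) := by
    refine Real.exp_le_exp.2 ?_
    have : 0 ≤ y := by linarith [hy.1]
    nlinarith
  have hp0 := pk_nonneg T 0
  calc κ / T * pk T 0 = Real.exp (-(2 * γ ^ 2)) * (Real.exp (-(C * (18 * γ))) *
        ((pk T 0 * Real.exp (-(1/8))) / (4 * T))) := by
        have : Real.exp (-(2 * γ ^ 2) - C * (18 * γ) - 1/8) =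
          Real.exp (-(2 * γ ^ 2)) * Real.exp (-(C * (18 * γ))) * Real.exp (-(1/8)) := by
          rw [← Real.exp_add, ← Real.exp_add]; congr 1
        rw [hκ, this]; field_simp
    _ ≤ Real.exp (-(m (2 * L + 1) * y) - VV δ m (2 * L + 1 + 1)) * (Real.exp (-(C * (18 * γ))) *
        (kd T (1/2) y)) := by
        gcongr
        refine le_trans ?_ k1
        gcongr

lemma bridge_indep (hmeas : ∀ t, Measurable (B t))
    (hB : IsPreBrownianReal (fun t : NNReal => B t) P) {ι : Type*} (T : NNReal) (hT : 0 < T)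
    (t : ι → NNReal) (ht : ∀ i, t i ≤ T) :
    IndepFun (fun ω i => B (t i) ω - (t i / T : ℝ) * B T ω) (fun ω (_ : Unit) => B T ω) P := by
  have hp := hB.isGaussianProcess.isProbabilityMeasure
  refine IsGaussianProcess.indepFun_of_covariance_eq_zero
    (X := fun i ω => B (t i) ω - (t i / T : ℝ) * B T ω) (Y := fun (_ : Unit) ω => B T ω) ?_ ?_ ?_ ?_
  · apply hB.isGaussianProcess.of_isGaussianProcess
    rintro (i | _)
    · exact ⟨{t i, T},
        { toFun x := x ⟨t i, by simp⟩ - (t i / T : ℝ) * x ⟨T, by simp⟩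
          map_add' x y := by simp; ring
          map_smul' c x := by simp; ring }, by simp⟩
    · exact ⟨{T},
        { toFun x := x ⟨T, by simp⟩
          map_add' x y := by simp
          map_smul' c x := by simp }, by simp⟩
  · intro i
    have h1 := hmeas (t i)
    have h2 := hmeas T
    exact (by fun_prop : Measurable _).aemeasurable
  · intro i
    exact (hmeas T).aemeasurable
  · intro i _
    have mT : MemLp (fun ω => B T ω) 2 P := (hB.isGaussianProcess.hasGaussianLaw_eval T).memLp_two
    have mt : MemLp (fun ω => B (t i) ω) 2 P :=
      (hB.isGaussianProcess.hasGaussianLaw_eval (t i)).memLp_two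
    have c1 : cov[fun ω => B (t i) ω, fun ω => B T ω; P] = min (t i) T :=
      hB.covariance_fun_eval (t i) T
    have c2 : cov[fun ω => B T ω, fun ω => B T ω; P] = min T T := hB.covariance_fun_eval T T
    have hT' : (T : ℝ) ≠ 0 := by exact_mod_cast hT.ne'
    rw [covariance_fun_sub_left mt (mT.const_mul _) mT, covariance_const_mul_left, c1, c2,
      min_self, min_eq_left (ht i)]
    field_simp
    ring

/-- barrier event on the grid -/
def AA {Ω : Type*} (B : ℝ → Ω → ℝ) (γ T δ : ℝ) (N : ℕ) : Set Ω :=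
  {ω | ∀ k ∈ Finset.range (N + 1), B (k * δ) ω - ((k * δ) / T) * B T ω
    ≤ 1 - γ * Real.log (max (min (k * δ) (T - k * δ)) 1)}

lemma AA_measurable (hmeas : ∀ t, Measurable (B t)) (γ T δ : ℝ) (N : ℕ) :
    MeasurableSet (AA B γ T δ N) := by
  have : AA B γ T δ N = ⋂ k ∈ Finset.range (N + 1), {ω | B (k * δ) ω - ((k * δ) / T) * B T ω
    ≤ 1 - γ * Real.log (max (min (k * δ) (T - k * δ)) 1)} := by
    ext ω; simp [AA]
  rw [this]
  refine Finset.measurableSet_biInter _ fun k _ => measurableSet_le ?_ measurable_const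
  have h1 := hmeas (k * δ)
  have h2 := hmeas T
  fun_prop

lemma grid_bound (hmeas : ∀ t, Measurable (B t))
    (hB : IsPreBrownianReal (fun t : NNReal => B t) P) {γ : ℝ} (hγ : 0 < γ) :
    ∃ κ : ℝ, 0 < κ ∧ ∀ (δ : ℝ) (L : ℕ), 0 < δ → δ ≤ 1 → ∀ T : ℝ, T = ((2 * L + 1 : ℕ) + 1) * δ →
      1 ≤ T → ENNReal.ofReal (κ / T) ≤ P (AA B γ T δ (2 * L + 1 + 1)) := by
  obtain ⟨κ, hκ, hj⟩ := grid_joint hmeas hB hγ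
  refine ⟨κ, hκ, fun δ L hδ hδ1 T hT hT1 => ?_⟩
  have hT0 : 0 < T := by linarith
  have h := hj δ L hδ hδ1 T hT hT1
  set D : Set Ω := {ω | B T ω ∈ Set.Icc (-(1/2) : ℝ) 0} with hD
  set m := mm γ δ (L + 1) with hm
  have hTN : ((2 * L + 1 + 1 : ℕ) : ℝ) * δ = T := by rw [hT]; push_cast; ring
  have hsub : EE B δ m (2 * L + 1 + 1) ∩
      {ω | YY B δ m (2 * L + 1 + 1) ω ∈ Set.Icc (1/2) 1} ⊆ AA B γ T δ (2 * L + 1 + 1) ∩ D := by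
    rintro ω ⟨h1, h2⟩
    have hend : hh δ m (2 * L + 1 + 1) = 0 := hh_end (L + 1)
    have h2' : 1/2 - 0 - B T ω ∈ Set.Icc (1/2 : ℝ) 1 := by
      have : YY B δ m (2 * L + 1 + 1) ω ∈ Set.Icc (1/2 : ℝ) 1 := h2
      unfold YY at this
      rwa [hend, hTN] at this
    have hd : ω ∈ D := by
      show B T ω ∈ Set.Icc (-(1/2) : ℝ) 0
      exact ⟨by linarith [h2'.2], by linarith [h2'.1]⟩
    refine ⟨fun k hk => ?_, hd⟩
    have hk' : k < 2 * L + 1 + 1 + 1 := Finset.mem_range.1 hk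
    have hy : 0 < YY B δ m k ω := h1 k hk
    have hg := hh_ge hγ hδ (L + 1) k (by omega)
    have eT : 2 * ((L + 1 : ℕ) : ℝ) * δ = T := by rw [hT]; push_cast; ring
    rw [eT, ← hm] at hg
    unfold YY at hy
    have hkT : k * δ ≤ T := by
      rw [← hTN]
      have : (k : ℝ) ≤ (2 * L + 1 + 1 : ℕ) := by exact_mod_cast Nat.lt_succ_iff.1 hk'
      gcongr
    have hr1 : k * δ / T ≤ 1 := (div_le_one hT0).2 hkT
    have hr0 : 0 ≤ k * δ / T := by positivity
    have hb0 : B T ω ≤ 0 := hd.2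
    have hb1 : -(1/2) ≤ B T ω := hd.1
    have : -(1/2) ≤ k * δ / T * B T ω := by nlinarith
    linarith
  have hind : P (AA B γ T δ (2 * L + 1 + 1) ∩ D) = P (AA B γ T δ (2 * L + 1 + 1)) * P D := by
    have hi := bridge_indep hmeas hB (ι := Fin (2 * L + 1 + 1 + 1)) ⟨T, hT0.le⟩ hT0
      (fun k => ⟨k * δ, by positivity⟩) (fun k => by
        show (k : ℝ) * δ ≤ T
        rw [← hTN]
        have : ((k : ℕ) : ℝ) ≤ (2 * L + 1 + 1 : ℕ) := by exact_mod_cast Nat.lt_succ_iff.1 k.2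
        gcongr)
    have hs1 : MeasurableSet {x : Fin (2 * L + 1 + 1 + 1) → ℝ | ∀ k, x k ≤
        1 - γ * Real.log (max (min (k * δ) (T - k * δ)) 1)} := by
      have : {x : Fin (2 * L + 1 + 1 + 1) → ℝ | ∀ k, x k ≤
        1 - γ * Real.log (max (min (k * δ) (T - k * δ)) 1)} = ⋂ k : Fin (2 * L + 1 + 1 + 1), {x | x k ≤
        1 - γ * Real.log (max (min (k * δ) (T - k * δ)) 1)} := by
        ext; simp
      rw [this]
      exact MeasurableSet.iInter fun k => measurableSet_le (measurable_pi_apply k) measurable_const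
    have hs2 : MeasurableSet {x : Unit → ℝ | x () ∈ Set.Icc (-(1/2) : ℝ) 0} :=
      measurable_pi_apply () measurableSet_Icc
    have := hi.measure_inter_preimage_eq_mul _ _ hs1 hs2
    have eA : AA B γ T δ (2 * L + 1 + 1) = (fun ω (i : Fin (2 * L + 1 + 1 + 1)) =>
        B (i * δ) ω - (i * δ / T : ℝ) * B T ω) ⁻¹' {x : Fin (2 * L + 1 + 1 + 1) → ℝ | ∀ k, x k ≤
        1 - γ * Real.log (max (min (k * δ) (T - k * δ)) 1)} := by
      ext ω
      simp only [AA, Set.mem_preimage, Set.mem_ofPred_eq, Finset.mem_range, Fin.forall_iff]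
    rw [eA]
    exact this
  have hPD : P D ≤ ENNReal.ofReal (pk T 0 * (1/2)) := by
    have hl := (hB.hasLaw_eval ⟨T, hT0.le⟩).map_eq
    have hl' : P.map (B T) = gaussianReal 0 T.toNNReal := by
      rw [Real.toNNReal_of_nonneg hT0.le]; exact hl
    have : P D = (P.map (B T)) (Set.Icc (-(1/2)) 0) := by
      rw [Measure.map_apply (hmeas T) measurableSet_Icc]; rfl
    have hv' : T.toNNReal ≠ 0 := by simpa using hT0
    rw [this, hl', gaussianReal_apply _ hv']
    have : ENNReal.ofReal (pk T 0 * (1/2)) = ∫⁻ _ in Set.Icc (-(1/2) : ℝ) 0, ENNReal.ofReal (pk T 0) := by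
      rw [setLIntegral_const, Real.volume_Icc, ← ENNReal.ofReal_mul (pk_nonneg _ _)]
      congr 1; ring
    rw [this]
    refine lintegral_mono fun x => ?_
    rw [gaussianPDF, ← pk_eq hT0.le]
    exact ENNReal.ofReal_le_ofReal (pk_le _ _ hT0)
  have h2 := h.trans (measure_mono hsub)
  rw [hind] at h2
  have h3 := h2.trans (mul_le_mul_right hPD _)
  have hpos : 0 < pk T 0 * (1/2) := mul_pos (pk_pos hT0 0) (by norm_num)
  exact (ENNReal.mul_le_mul_iff_left (by simpa using hpos) ENNReal.ofReal_ne_top).1 h3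

end

end

end BBLog

open MeasureTheory ProbabilityTheory

namespace BBLog

/-- mesh of the dyadic grid -/
noncomputable def dd (q : ℕ) : ℝ := 1 / 2 ^ (q + 1)

lemma dd_pos (q : ℕ) : 0 < dd q := by unfold dd; positivity

lemma dd_le (q : ℕ) : dd q ≤ 1 := by
  unfold dd
  rw [div_le_one (by positivity)]
  exact one_le_pow₀ (by norm_num)

lemma AA_anti {Ω : Type*} (B : ℝ → Ω → ℝ) (γ T : ℝ) (n : ℕ) :
    Antitone fun q => AA B γ T (dd q) (n * 2 ^ (q + 1)) := by
  refine antitone_nat_of_succ_le fun q ω h k hk => ?_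
  have hk := Finset.mem_range.1 hk
  have h2 := h (2 * k) (Finset.mem_range.2 (by
    have : n * 2 ^ (q + 1 + 1) = 2 * (n * 2 ^ (q + 1)) := by ring
    omega))
  have e : ((2 * k : ℕ) : ℝ) * dd (q + 1) = k * dd q := by
    unfold dd; push_cast; field_simp; ring
  rw [e] at h2
  exact h2

lemma iInter_AA {Ω : Type*} (B : ℝ → Ω → ℝ) (hcont : ∀ ω, Continuous fun t => B t ω)
    (γ : ℝ) (n : ℕ) :
    (⋂ q, AA B γ n (dd q) (n * 2 ^ (q + 1))) ⊆ {ω | ∀ t ∈ Set.Icc (0 : ℝ) n,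
            B t ω - (t / n) * B n ω ≤ 1 - γ * Real.log (max (min t ((n : ℝ) - t)) 1)} := by
  intro ω h t ht
  have h := Set.mem_iInter.1 h
  have hpow : Filter.Tendsto (fun q : ℕ => (2 : ℝ) ^ (q + 1)) Filter.atTop Filter.atTop :=
    (Filter.tendsto_add_atTop_iff_nat 1).2 (tendsto_pow_atTop_atTop_of_one_lt (by norm_num))
  have hlim := (tendsto_nat_floor_mul_div_atTop ht.1).comp hpow
  have hc1 : Continuous fun s : ℝ => B s ω - (s / n) * B n ω := by
    have := hcont ω
    fun_prop
  have hc2 : Continuous fun s : ℝ => 1 - γ * Real.log (max (min s ((n : ℝ) - s)) 1) := by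
    refine continuous_const.sub (continuous_const.mul (Continuous.log (by fun_prop) fun s => ?_))
    have : (1 : ℝ) ≤ max (min s ((n : ℝ) - s)) 1 := le_max_right _ _
    linarith
  refine le_of_tendsto_of_tendsto' ((hc1.tendsto t).comp hlim) ((hc2.tendsto t).comp hlim)
    fun q => ?_
  have hk : ⌊t * 2 ^ (q + 1)⌋₊ ≤ n * 2 ^ (q + 1) := by
    refine Nat.floor_le_of_le ?_
    push_cast
    have := ht.2
    gcongr
  have h1 := h q ⌊t * 2 ^ (q + 1)⌋₊ (Finset.mem_range.2 (by omega))
  have e : (⌊t * 2 ^ (q + 1)⌋₊ : ℝ) * dd q = (⌊t * 2 ^ (q + 1)⌋₊ : ℝ) / 2 ^ (q + 1) := by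
    unfold dd; ring
  rw [e] at h1
  exact h1

end BBLog

theorem brownian_bridge_log_barrier_lower_bound {Ω : Type*} [MeasurableSpace Ω]
    (P : Measure Ω) [IsProbabilityMeasure P] (B : ℝ → Ω → ℝ)
    (hmeas : ∀ t, Measurable (B t))
    (hcont : ∀ ω, Continuous fun t => B t ω)
    (hgauss : ∀ (k : ℕ) (t : Fin k → ℝ), (∀ i, 0 ≤ t i) → ∀ a : Fin k → ℝ,
      Measure.map (fun ω => ∑ i, a i * B (t i) ω) P
        = gaussianReal 0 (Real.toNNReal (∑ i, ∑ j, a i * a j * min (t i) (t j))))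
    (γ : ℝ) (hγ : 0 < γ) :
    ∃ c : ℝ, 0 < c ∧ ∀ n : ℕ, 1 ≤ n →
      ENNReal.ofReal (c / n)
        ≤ P {ω | ∀ t ∈ Set.Icc (0 : ℝ) n,
            B t ω - (t / n) * B n ω ≤ 1 - γ * Real.log (max (min t ((n : ℝ) - t)) 1)} := by
  obtain ⟨κ, hκ, hgrid⟩ := BBLog.grid_bound hmeas (BBLog.preBM P B hmeas hgauss) hγ
  refine ⟨κ, hκ, fun n hn => ?_⟩
  refine le_trans ?_ (measure_mono (BBLog.iInter_AA B hcont γ n))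
  have hlim := tendsto_measure_iInter_atTop (μ := P)
    (s := fun q => BBLog.AA B γ n (BBLog.dd q) (n * 2 ^ (q + 1)))
    (fun q => (BBLog.AA_measurable hmeas γ n _ _).nullMeasurableSet)
    (BBLog.AA_anti B γ n n) ⟨0, measure_ne_top _ _⟩
  refine ge_of_tendsto' hlim fun q => ?_
  obtain ⟨L, hL⟩ : ∃ L, n * 2 ^ q = L + 1 :=
    Nat.exists_eq_succ_of_ne_zero (Nat.mul_ne_zero (by omega) (by positivity))
  have e1 : n * 2 ^ (q + 1) = 2 * L + 1 + 1 := by rw [pow_succ, ← mul_assoc, hL]; ring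
  have e2 : (n : ℝ) = ((2 * L + 1 : ℕ) + 1) * BBLog.dd q := by
    have : ((n * 2 ^ (q + 1) : ℕ) : ℝ) = ((2 * L + 1 + 1 : ℕ) : ℝ) := by rw [e1]
    push_cast at this
    unfold BBLog.dd
    push_cast
    rw [← this]
    field_simp
  have := hgrid (BBLog.dd q) L (BBLog.dd_pos q) (BBLog.dd_le q) n e2 (by exact_mod_cast hn)
  simp only [Function.comp, e1]
  exact this
end

section
/- Let (X_1,…,X_n) and (Y_1,…,Y_n) be centered Gaussian vectors with E[X_i²] = E[Y_i²] for all i and Cov(X_i, X_j) ≤ Cov(Y_i, Y_j) for all i, j. Then for every t_1,…,t_n ∈ ℝ, P(X_i ≤ t_i for all i) ≤ P(Y_i ≤ t_i for all i); in particular P(max_i X_i ≤ t) ≤ P(max_i Y_i ≤ t) for all t, i.e., max_i Y_i is stochastically dominated by max_i X_i. -/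
open MeasureTheory ProbabilityTheory

/-- `X` is a centered Gaussian vector: every linear combination of its coordinates is a
centered real Gaussian (with its own variance). -/
def IsCenteredGaussianVec {Ω : Type*} [MeasurableSpace Ω] (P : Measure Ω) {n : ℕ}
    (X : Fin n → Ω → ℝ) : Prop :=
  ∀ a : Fin n → ℝ, Measure.map (fun ω => ∑ i, a i * X i ω) P
    = gaussianReal 0 (Real.toNNReal (∫ ω, (∑ i, a i * X i ω) ^ 2 ∂P))


lemma slep_deriv_bdd {f : ℝ → ℝ} (hf : ContDiff ℝ 3 f) {A B a b : ℝ}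
    (hA : ∀ x ≤ A, f x = a) (hB : ∀ x ≥ B, f x = b) (k : ℕ) (hk : 1 ≤ k) (hk3 : k ≤ 3) :
    ∃ K, ∀ x, |iteratedDeriv k f x| ≤ K := by
  have hc : Continuous (iteratedDeriv k f) := hf.continuous_iteratedDeriv k (by exact_mod_cast hk3)
  obtain ⟨K, hK⟩ := (isCompact_Icc (a := A) (b := B)).exists_bound_of_continuousOn hc.continuousOn
  have hz : ∀ c x : ℝ, f =ᶠ[nhds x] (fun _ => c) → iteratedDeriv k f x = 0 := by
    intro c x h
    rw [h.iteratedDeriv_eq, iteratedDeriv_const]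
    simp; omega
  refine ⟨max K 0, fun x => ?_⟩
  rcases lt_or_ge x A with h | h
  · rw [hz a x]
    · simp
    · filter_upwards [Iio_mem_nhds h] with y hy using hA y (le_of_lt hy)
  rcases lt_or_ge B x with h' | h'
  · rw [hz b x]
    · simp
    · filter_upwards [Ioi_mem_nhds h'] with y hy using hB y (le_of_lt hy)
  · exact (hK x ⟨h, h'⟩).trans (le_max_left _ _)

lemma slep_taylor {f : ℝ → ℝ} (hf : ContDiff ℝ 3 f) {K : ℝ}
    (hK : ∀ x, |iteratedDeriv 3 f x| ≤ K) (s x : ℝ) :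
    |f (s + x) - f s - iteratedDeriv 1 f s * x - 1 / 2 * (iteratedDeriv 2 f s * x * x)|
      ≤ K * |x| ^ 3 := by
  have hK0 : 0 ≤ K := (abs_nonneg _).trans (hK 0)
  by_cases hx : x = 0
  · simp [hx]
  have hne : s ≠ s + x := by simpa using hx
  obtain ⟨y, _, hy⟩ := taylor_mean_remainder_lagrange_iteratedDeriv (n := 2) hne
    (by simpa using (hf.of_le (by norm_num)).contDiffOn)
  have h1 : ∀ k ≤ 3, iteratedDerivWithin k f (Set.uIcc s (s + x)) s = iteratedDeriv k f s := by
    intro k hk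
    exact iteratedDerivWithin_eq_iteratedDeriv (uniqueDiffOn_uIcc hne)
      (hf.of_le (by exact_mod_cast hk)).contDiffAt Set.left_mem_uIcc
  rw [taylor_within_apply] at hy
  simp only [Finset.sum_range_succ, Finset.sum_range_zero, h1 0 (by norm_num), h1 1 (by norm_num), h1 2 (by norm_num)] at hy
  simp [Nat.factorial] at hy
  have : f (s + x) - f s - iteratedDeriv 1 f s * x - 1 / 2 * (iteratedDeriv 2 f s * x * x)
    = iteratedDeriv 3 f y * x ^ 3 / 6 := by
    rw [← hy, iteratedDeriv_one]; ring
  rw [this, abs_div, abs_mul, abs_pow]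
  have := mul_le_mul_of_nonneg_right (hK y) (by positivity : 0 ≤ |x| ^ 3)
  have h0 : 0 ≤ K * |x|^3 := by positivity
  norm_num
  linarith

def SlepJet {n : ℕ} (F : (Fin n → ℝ) → ℝ) : Prop :=
  Measurable F ∧ (∀ x, 0 ≤ F x) ∧ (∀ x, F x ≤ 1) ∧
  ∃ (L : (Fin n → ℝ) → Fin n → ℝ) (Q : (Fin n → ℝ) → Fin n → Fin n → ℝ) (K : ℝ),
    0 ≤ K ∧ (∀ s i, L s i ≤ 0) ∧ (∀ s i, |L s i| ≤ K) ∧ (∀ s i j, |Q s i j| ≤ K) ∧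
    (∀ s i j, i ≠ j → 0 ≤ Q s i j) ∧
    ∀ s x, ‖x‖ ≤ 1 → |F (s + x) - F s - ∑ i, L s i * x i
      - 1 / 2 * ∑ i, ∑ j, Q s i j * x i * x j| ≤ K * ‖x‖ ^ 3

lemma slep_jet_one {n : ℕ} : SlepJet (fun _ : Fin n → ℝ => 1) := by
  refine ⟨measurable_const, by simp, by simp, fun _ _ => 0, fun _ _ _ => 0, 0, ?_⟩
  simp

lemma slep_jet_coord {n : ℕ} (a : Fin n) {f : ℝ → ℝ} (hf : ContDiff ℝ 3 f) (h0 : ∀ x, 0 ≤ f x)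
    (h1 : ∀ x, f x ≤ 1) (hanti : Antitone f) {A B c d : ℝ}
    (hA : ∀ x ≤ A, f x = c) (hB : ∀ x ≥ B, f x = d) :
    SlepJet (fun x : Fin n → ℝ => f (x a)) := by
  obtain ⟨K1, hK1⟩ := slep_deriv_bdd hf hA hB 1 (by norm_num) (by norm_num)
  obtain ⟨K2, hK2⟩ := slep_deriv_bdd hf hA hB 2 (by norm_num) (by norm_num)
  obtain ⟨K3, hK3⟩ := slep_deriv_bdd hf hA hB 3 (by norm_num) (by norm_num)
  have p1 := (abs_nonneg _).trans (hK1 0)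
  have p2 := (abs_nonneg _).trans (hK2 0)
  have p3 := (abs_nonneg _).trans (hK3 0)
  refine ⟨hf.continuous.measurable.comp (measurable_pi_apply a), fun x => h0 _, fun x => h1 _,
    fun s i => if i = a then iteratedDeriv 1 f (s a) else 0,
    fun s i j => if i = a then (if j = a then iteratedDeriv 2 f (s a) else 0) else 0,
    K1 + K2 + K3, by positivity, ?_, ?_, ?_, ?_, ?_⟩
  · intro s i
    dsimp only
    split_ifs
    · rw [iteratedDeriv_one]; exact hanti.deriv_nonpos
    · rfl
  · intro s i
    dsimp only
    split_ifs
    · linarith [hK1 (s a)]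
    · simp; linarith
  · intro s i j
    dsimp only
    split_ifs
    · linarith [hK2 (s a)]
    all_goals simp; linarith
  · intro s i j hij
    dsimp only
    split_ifs with h h'
    · exact absurd (h.trans h'.symm) hij
    all_goals rfl
  · intro s x hx
    have := slep_taylor hf hK3 (s a) (x a)
    simp only [ite_mul, zero_mul, Finset.sum_ite_eq', Finset.mem_univ, if_true, Pi.add_apply]
    have e : ∑ i, ∑ j, (if i = a then (if j = a then iteratedDeriv 2 f (s a) * x i * x j else 0) else 0)
      = iteratedDeriv 2 f (s a) * x a * x a := by
      rw [Finset.sum_eq_single a]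
      · simp
      · intro b _ hb; simp [hb]
      · simp
    rw [e]
    refine this.trans ?_
    have : |x a| ≤ ‖x‖ := norm_le_pi_norm x a
    gcongr
    linarith

lemma slep_sum_bound {n : ℕ} {L : Fin n → ℝ} {K : ℝ} (h : ∀ i, |L i| ≤ K)
    (x : Fin n → ℝ) : |∑ i, L i * x i| ≤ n * K * ‖x‖ := by
  refine (Finset.abs_sum_le_sum_abs _ _).trans ?_
  calc ∑ i, |L i * x i| ≤ ∑ i : Fin n, K * ‖x‖ := by
        refine Finset.sum_le_sum fun i _ => ?_
        rw [abs_mul]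
        exact mul_le_mul (h i) (norm_le_pi_norm x i) (abs_nonneg _) ((abs_nonneg _).trans (h i))
    _ = n * K * ‖x‖ := by simp; ring

lemma slep_sum_bound2 {n : ℕ} {Q : Fin n → Fin n → ℝ} {K : ℝ} (h : ∀ i j, |Q i j| ≤ K)
    (x : Fin n → ℝ) : |∑ i, ∑ j, Q i j * x i * x j| ≤ n * n * K * ‖x‖ ^ 2 := by
  refine (Finset.abs_sum_le_sum_abs _ _).trans ?_
  calc ∑ i, |∑ j, Q i j * x i * x j| ≤ ∑ i : Fin n, n * K * ‖x‖ ^ 2 := by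
        refine Finset.sum_le_sum fun i _ => ?_
        have := slep_sum_bound (L := fun j => Q i j * x i) (K := K * ‖x‖) (fun j => by
          rw [abs_mul]
          exact mul_le_mul (h i j) (norm_le_pi_norm x i) (abs_nonneg _) ((abs_nonneg _).trans (h i j))) x
        refine this.trans (le_of_eq (by ring))
    _ = _ := by simp; ring

/-- scalar core of the product estimate -/
lemma slep_mul_core {F G F' G' l m q r t M : ℝ} (ht : 0 ≤ t) (ht1 : t ≤ 1) (hM : 1 ≤ M)
    (hF : |F| ≤ 1) (hG' : |G'| ≤ 1)
    (hl : |l| ≤ M * t) (hm : |m| ≤ M * t) (hq : |q| ≤ M * t ^ 2) (hr : |r| ≤ M * t ^ 2)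
    (h1 : |F' - F - l - 1 / 2 * q| ≤ M * t ^ 3) (h2 : |G' - G - m - 1 / 2 * r| ≤ M * t ^ 3) :
    |F' * G' - F * G - (F * m + G * l) - 1 / 2 * (F * r + G * q + 2 * (l * m))|
      ≤ 10 * M ^ 2 * t ^ 3 := by
  have e : F' * G' - F * G - (F * m + G * l) - 1 / 2 * (F * r + G * q + 2 * (l * m))
    = (F' - F - l - 1 / 2 * q) * G' + (F + l + 1/2 * q) * (G' - G - m - 1 / 2 * r)
      + (1/2 * (l * r) + 1/2 * (q * m) + 1/4 * (q * r)) := by ring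
  have b1 : |(F' - F - l - 1 / 2 * q) * G'| ≤ M * t^3 * 1 := by
    rw [abs_mul]; gcongr
  have b0 : |F + l + 1/2 * q| ≤ 3 * M := by
    have : M * t ≤ M := by nlinarith
    have : M * t ^ 2 ≤ M := by nlinarith [pow_le_one₀ ht ht1 (n := 2)]
    rw [abs_le] at *
    constructor <;> linarith
  have b2 : |(F + l + 1/2 * q) * (G' - G - m - 1 / 2 * r)| ≤ 3 * M * (M * t^3) := by
    rw [abs_mul]; gcongr
  have b3 : |l * r| ≤ M * t * (M * t^2) := by rw [abs_mul]; gcongr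
  have b4 : |q * m| ≤ M * t^2 * (M * t) := by rw [abs_mul]; gcongr
  have b5 : |q * r| ≤ M * t^2 * (M * t^2) := by rw [abs_mul]; gcongr
  have c1 : M * t^3 * 1 ≤ M^2 * t^3 := by
    have : M ≤ M^2 := by nlinarith
    rw [mul_one]; gcongr
  have c5 : M * t^2 * (M * t^2) ≤ M^2 * t^3 := by
    have : t^4 ≤ t^3 := pow_le_pow_of_le_one ht ht1 (by norm_num)
    calc M * t^2 * (M * t^2) = M^2 * t^4 := by ring
      _ ≤ _ := by gcongr
  have c0 : 0 ≤ M^2 * t^3 := by positivity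
  rw [e]
  have d3 : M * t * (M * t^2) = M^2 * t^3 := by ring
  have d4 : M * t^2 * (M * t) = M^2 * t^3 := by ring
  have d2 : 3 * M * (M * t^3) = 3 * (M^2 * t^3) := by ring
  rw [abs_le] at *
  constructor <;> linarith

lemma slep_jet_mul {n : ℕ} {F G : (Fin n → ℝ) → ℝ} (hF : SlepJet F) (hG : SlepJet G) :
    SlepJet (fun x => F x * G x) := by
  obtain ⟨mF, F0, F1, L, Q, K, hK, L0, LK, QK, Q0, hT⟩ := hF
  obtain ⟨mG, G0, G1, L', Q', K', hK', L0', LK', QK', Q0', hT'⟩ := hG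
  have aF : ∀ x, |F x| ≤ 1 := fun x => abs_le.2 ⟨by linarith [F0 x], F1 x⟩
  have aG : ∀ x, |G x| ≤ 1 := fun x => abs_le.2 ⟨by linarith [G0 x], G1 x⟩
  set M : ℝ := 1 + (1 + n + n * n) * (K + K') with hM
  have hM1 : 1 ≤ M := by rw [hM]; nlinarith [show (0:ℝ) ≤ (1 + n + n * n) * (K + K') by positivity]
  have hKM : K + K' ≤ M := by
    rw [hM]; nlinarith [show (0:ℝ) ≤ (n + n * n) * (K + K') by positivity]
  have hnM : n * (K + K') ≤ M := by
    rw [hM]; nlinarith [show (0:ℝ) ≤ (1 + n * n) * (K + K') by positivity]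
  have hnnM : n * n * (K + K') ≤ M := by
    rw [hM]; nlinarith [show (0:ℝ) ≤ (1 + n) * (K + K') by positivity]
  have kM : K ≤ M := by linarith
  have kM' : K' ≤ M := by linarith
  have nM : n * K ≤ M := le_trans (by gcongr; linarith) hnM
  have nM' : n * K' ≤ M := le_trans (by gcongr; linarith) hnM
  have nnM : n * n * K ≤ M := le_trans (by gcongr; linarith) hnnM
  have nnM' : n * n * K' ≤ M := le_trans (by gcongr; linarith) hnnM
  have hMM : M ≤ M ^ 2 := by nlinarith
  have mm : ∀ a b c d : ℝ, |a| ≤ c → |b| ≤ d → |a * b| ≤ c * d := by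
    intro a b c d h1 h2
    rw [abs_mul]; exact mul_le_mul h1 h2 (abs_nonneg _) ((abs_nonneg _).trans h1)
  refine ⟨mF.mul mG, fun x => mul_nonneg (F0 x) (G0 x), fun x => mul_le_one₀ (F1 x) (G0 x) (G1 x),
    fun s i => F s * L' s i + G s * L s i,
    fun s i j => F s * Q' s i j + G s * Q s i j + L s i * L' s j + L s j * L' s i,
    10 * M ^ 2, by positivity, ?_, ?_, ?_, ?_, ?_⟩
  · intro s i
    have := mul_nonpos_of_nonneg_of_nonpos (F0 s) (L0' s i)
    have := mul_nonpos_of_nonneg_of_nonpos (G0 s) (L0 s i)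
    dsimp only; linarith
  · intro s i
    have h1 := mm _ _ _ _ (aF s) (LK' s i)
    have h2 := mm _ _ _ _ (aG s) (LK s i)
    have := abs_add_le (F s * L' s i) (G s * L s i)
    dsimp only; linarith
  · intro s i j
    have h1 := mm _ _ _ _ (aF s) (QK' s i j)
    have h2 := mm _ _ _ _ (aG s) (QK s i j)
    have h3 := mm _ _ _ _ ((LK s i).trans kM) ((LK' s j).trans kM')
    have h4 := mm _ _ _ _ ((LK s j).trans kM) ((LK' s i).trans kM')
    dsimp only
    rw [← sq] at h3 h4
    rw [abs_le] at *
    constructor <;> linarith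
  · intro s i j hij
    have h1 := mul_nonneg (F0 s) (Q0' s i j hij)
    have h2 := mul_nonneg (G0 s) (Q0 s i j hij)
    have h3 := mul_nonneg_of_nonpos_of_nonpos (L0 s i) (L0' s j)
    have h4 := mul_nonneg_of_nonpos_of_nonpos (L0 s j) (L0' s i)
    dsimp only; linarith
  · intro s x hx
    have hx0 := norm_nonneg x
    have key := slep_mul_core (F := F s) (G := G s) (F' := F (s + x)) (G' := G (s + x))
      (l := ∑ i, L s i * x i) (m := ∑ i, L' s i * x i) (q := ∑ i, ∑ j, Q s i j * x i * x j)
      (r := ∑ i, ∑ j, Q' s i j * x i * x j) (t := ‖x‖) (M := M) hx0 hx hM1 (aF s) (aG _)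
      ((slep_sum_bound (LK s) x).trans (by gcongr)) ((slep_sum_bound (LK' s) x).trans (by gcongr))
      ((slep_sum_bound2 (QK s) x).trans (by gcongr)) ((slep_sum_bound2 (QK' s) x).trans (by gcongr))
      ((hT s x hx).trans (by gcongr)) ((hT' s x hx).trans (by gcongr))
    have e1 : ∑ i, (F s * L' s i + G s * L s i) * x i
        = F s * ∑ i, L' s i * x i + G s * ∑ i, L s i * x i := by
      rw [Finset.mul_sum, Finset.mul_sum, ← Finset.sum_add_distrib]
      exact Finset.sum_congr rfl fun i _ => by ring
    have e3 : (∑ i, L s i * x i) * (∑ i, L' s i * x i) = ∑ i, ∑ j, L s i * L' s j * x i * x j := by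
      rw [Finset.sum_mul_sum]
      exact Finset.sum_congr rfl fun i _ => Finset.sum_congr rfl fun j _ => by ring
    have e4 : (∑ i, L s i * x i) * (∑ i, L' s i * x i) = ∑ i, ∑ j, L s j * L' s i * x i * x j := by
      rw [mul_comm, Finset.sum_mul_sum]
      exact Finset.sum_congr rfl fun i _ => Finset.sum_congr rfl fun j _ => by ring
    have e2 : ∑ i, ∑ j, (F s * Q' s i j + G s * Q s i j + L s i * L' s j + L s j * L' s i) * x i * x j
        = F s * (∑ i, ∑ j, Q' s i j * x i * x j) + G s * (∑ i, ∑ j, Q s i j * x i * x j)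
          + 2 * ((∑ i, L s i * x i) * (∑ i, L' s i * x i)) := by
      rw [two_mul]
      nth_rewrite 1 [e3]
      rw [e4]
      simp only [Finset.mul_sum, ← Finset.sum_add_distrib]
      exact Finset.sum_congr rfl fun i _ => Finset.sum_congr rfl fun j _ => by ring
    rw [e1, e2]
    exact key

lemma slep_jet_prod {n : ℕ} {f : Fin n → (Fin n → ℝ) → ℝ} (hf : ∀ i, SlepJet (f i))
    (T : Finset (Fin n)) : SlepJet (fun x => ∏ i ∈ T, f i x) := by
  classical
  induction T using Finset.induction_on with
  | empty => simpa using slep_jet_one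
  | insert a s ha ih =>
    simp only [Finset.prod_insert ha]
    exact slep_jet_mul (hf a) ih

/-- The smooth approximations of the indicator. -/
lemma slep_jet_trans {n : ℕ} (a : Fin n) (t : ℝ) (k : ℕ) :
    SlepJet (fun x : Fin n → ℝ => 1 - Real.smoothTransition ((k + 1) * (x a - t))) := by
  have hk : (0:ℝ) < k + 1 := by positivity
  refine slep_jet_coord a (f := fun y => 1 - Real.smoothTransition ((k + 1) * (y - t)))
    ?_ ?_ ?_ ?_ (A := t) (B := t + 1) (c := 1) (d := 0) ?_ ?_
  · have : ContDiff ℝ 3 Real.smoothTransition := Real.smoothTransition.contDiff (n := 3)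
    exact contDiff_const.sub (this.comp (by fun_prop))
  · intro x; linarith [Real.smoothTransition.le_one ((k + 1) * (x - t))]
  · intro x; linarith [Real.smoothTransition.nonneg ((k + 1) * (x - t))]
  · intro x y h
    have := Real.smoothTransition.monotone (a := (k + 1) * (x - t)) (b := (k + 1) * (y - t))
      (by gcongr)
    dsimp only; linarith
  · intro x hx
    rw [Real.smoothTransition.zero_of_nonpos, sub_zero]
    exact mul_nonpos_of_nonneg_of_nonpos hk.le (by linarith)
  · intro x hx
    rw [Real.smoothTransition.one_of_one_le, sub_self]
    have : (0:ℝ) ≤ k := by positivity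
    nlinarith [hx.le]

lemma slep_jet_global {n : ℕ} {F : (Fin n → ℝ) → ℝ} (hF : SlepJet F) :
    ∃ (L : (Fin n → ℝ) → Fin n → ℝ) (Q : (Fin n → ℝ) → Fin n → Fin n → ℝ) (K : ℝ),
    0 ≤ K ∧ (∀ s i j, i ≠ j → 0 ≤ Q s i j) ∧
    ∀ s x, |F (s + x) - F s - ∑ i, L s i * x i
      - 1 / 2 * ∑ i, ∑ j, Q s i j * x i * x j| ≤ K * ‖x‖ ^ 3 := by
  obtain ⟨mF, F0, F1, L, Q, K, hK, L0, LK, QK, Q0, hT⟩ := hF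
  refine ⟨L, Q, 2 + K + n * K + n * n * K, by positivity, Q0, fun s x => ?_⟩
  rcases le_total ‖x‖ 1 with h | h
  · refine (hT s x h).trans ?_
    gcongr
    have : (0:ℝ) ≤ n * K := by positivity
    have : (0:ℝ) ≤ n * n * K := by positivity
    linarith
  · have b1 := slep_sum_bound (LK s) x
    have b2 := slep_sum_bound2 (QK s) x
    have p1 : ‖x‖ ≤ ‖x‖ ^ 3 := le_self_pow₀ h (by norm_num)
    have p2 : ‖x‖ ^ 2 ≤ ‖x‖ ^ 3 := pow_le_pow_right₀ h (by norm_num)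
    have p0 : 1 ≤ ‖x‖ ^ 3 := one_le_pow₀ h
    have c1 : n * K * ‖x‖ ≤ n * K * ‖x‖ ^ 3 := by gcongr
    have c2 : n * n * K * ‖x‖ ^ 2 ≤ n * n * K * ‖x‖ ^ 3 := by gcongr
    have c3 : K * 1 ≤ K * ‖x‖ ^ 3 := by gcongr
    have f0 := F0 s
    have f1 := F1 s
    have g0 := F0 (s + x)
    have g1 := F1 (s + x)
    have c4 : 0 ≤ n * n * K * ‖x‖ ^ 3 := by positivity
    rw [abs_le] at *
    constructor <;> nlinarith

/-- Centered Gaussian measures. -/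
def SlepGauss {n : ℕ} (μ : Measure (Fin n → ℝ)) : Prop :=
  IsProbabilityMeasure μ ∧ ∀ L : StrongDual ℝ (Fin n → ℝ), ∃ v : NNReal, μ.map L = gaussianReal 0 v

lemma slep_memLp {n : ℕ} {μ : Measure (Fin n → ℝ)} (hμ : SlepGauss μ) (i : Fin n)
    (p : NNReal) : MemLp (fun x : Fin n → ℝ => x i) p μ := by
  obtain ⟨v, hv⟩ := hμ.2 (ContinuousLinearMap.proj i)
  have h := memLp_id_gaussianReal (μ := 0) (v := v) p
  rw [← hv, memLp_map_measure_iff (by fun_prop) (by fun_prop)] at h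
  exact h

lemma slep_mean {n : ℕ} {μ : Measure (Fin n → ℝ)} (hμ : SlepGauss μ) (i : Fin n) :
    ∫ x, x i ∂μ = 0 := by
  obtain ⟨v, hv⟩ := hμ.2 (ContinuousLinearMap.proj i)
  have h := integral_id_gaussianReal (μ := 0) (v := v)
  rw [← hv, integral_map (by fun_prop) (by fun_prop)] at h
  exact h

lemma slep_int_norm {n : ℕ} {μ : Measure (Fin n → ℝ)} (hμ : SlepGauss μ) :
    Integrable (fun x => ‖x‖ ^ 3) μ := by
  have := hμ.1
  have : MemLp (fun x : Fin n → ℝ => x) 3 μ := by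
    rw [memLp_pi_iff]
    intro i
    exact slep_memLp hμ i 3
  exact this.integrable_norm_pow (by norm_num)

lemma slep_int_mul {n : ℕ} {μ : Measure (Fin n → ℝ)} (hμ : SlepGauss μ) (i j : Fin n) :
    Integrable (fun x => x i * x j) μ :=
  MemLp.integrable_mul (p := 2) (q := 2) (slep_memLp hμ i 2) (slep_memLp hμ j 2)

lemma slep_int_coord {n : ℕ} {μ : Measure (Fin n → ℝ)} (hμ : SlepGauss μ) (i : Fin n) :
    Integrable (fun x => x i) μ := by
  have := hμ.1
  exact (slep_memLp hμ i 1).integrable (by simp)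

lemma slep_bdd_int {n : ℕ} {F : (Fin n → ℝ) → ℝ} (hF : SlepJet F)
    {Z : Type*} [MeasurableSpace Z] (μ : Measure Z) [IsFiniteMeasure μ] {g : Z → Fin n → ℝ}
    (hg : Measurable g) : Integrable (fun z => F (g z)) μ := by
  obtain ⟨mF, F0, F1, -⟩ := hF
  refine Integrable.of_bound (mF.comp hg).aestronglyMeasurable 1 (Filter.Eventually.of_forall fun z => ?_)
  rw [Real.norm_eq_abs, abs_of_nonneg (F0 _)]
  exact F1 _

lemma slep_expand {n : ℕ} {F : (Fin n → ℝ) → ℝ} (hF : SlepJet F) {μ : Measure (Fin n → ℝ)}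
    (hμ : SlepGauss μ) {l : Fin n → ℝ} {q : Fin n → Fin n → ℝ} {K : ℝ} {s : Fin n → ℝ}
    (h : ∀ x, |F (s + x) - F s - ∑ i, l i * x i
      - 1 / 2 * ∑ i, ∑ j, q i j * x i * x j| ≤ K * ‖x‖ ^ 3) {ε : ℝ} (hε : 0 ≤ ε) :
    |∫ x, F (s + ε • x) ∂μ - F s - 1 / 2 * ε ^ 2 * ∑ i, ∑ j, q i j * ∫ x, x i * x j ∂μ|
      ≤ K * ε ^ 3 * ∫ x, ‖x‖ ^ 3 ∂μ := by
  have := hμ.1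
  have i1 : Integrable (fun x => F (s + ε • x)) μ := slep_bdd_int hF μ (by fun_prop)
  have i2 : Integrable (fun x : Fin n → ℝ => ∑ i, l i * (ε * x i)) μ :=
    integrable_finsetSum _ fun i _ => ((slep_int_coord hμ i).const_mul ε).const_mul _
  have i3 : Integrable (fun x : Fin n → ℝ => ∑ i, ∑ j, q i j * ε ^ 2 * (x i * x j)) μ :=
    integrable_finsetSum _ fun i _ => integrable_finsetSum _ fun j _ =>
      (slep_int_mul hμ i j).const_mul _
  have e2 : ∫ x, ∑ i, l i * (ε * x i) ∂μ = 0 := by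
    rw [integral_finsetSum _ fun i _ => ((slep_int_coord hμ i).const_mul ε).const_mul _]
    simp [integral_const_mul, slep_mean hμ]
  have e3 : ∫ x, ∑ i, ∑ j, q i j * ε ^ 2 * (x i * x j) ∂μ
      = ε ^ 2 * ∑ i, ∑ j, q i j * ∫ x, x i * x j ∂μ := by
    rw [integral_finsetSum _ fun i _ => integrable_finsetSum _ fun j _ =>
      (slep_int_mul hμ i j).const_mul _, Finset.mul_sum]
    refine Finset.sum_congr rfl fun i _ => ?_
    rw [integral_finsetSum _ fun j _ => (slep_int_mul hμ i j).const_mul _, Finset.mul_sum]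
    refine Finset.sum_congr rfl fun j _ => ?_
    rw [integral_const_mul]; ring
  have e : ∫ x, F (s + ε • x) ∂μ - F s - 1 / 2 * ε ^ 2 * ∑ i, ∑ j, q i j * ∫ x, x i * x j ∂μ
      = ∫ x, (F (s + ε • x) - F s - ∑ i, l i * (ε * x i)
        - 1 / 2 * ∑ i, ∑ j, q i j * ε ^ 2 * (x i * x j)) ∂μ := by
    have j1 : Integrable (fun x => F (s + ε • x) - F s) μ := i1.sub (integrable_const _)
    have j2 : Integrable (fun x => F (s + ε • x) - F s - ∑ i, l i * (ε * x i)) μ := j1.sub i2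
    rw [integral_sub j2 (i3.const_mul _), integral_sub j1 i2, integral_sub i1 (integrable_const _),
      integral_const_mul, e2, e3]
    simp; ring
  rw [e, ← integral_const_mul, ← Real.norm_eq_abs]
  refine norm_integral_le_of_norm_le ((slep_int_norm hμ).const_mul _)
    (Filter.Eventually.of_forall fun x => ?_)
  have hx := h (ε • x)
  rw [norm_smul, Real.norm_eq_abs, abs_of_nonneg hε] at hx
  rw [Real.norm_eq_abs]
  have hr : K * ε ^ 3 * ‖x‖ ^ 3 = K * (ε * ‖x‖) ^ 3 := by ring
  rw [hr]
  convert hx using 2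
  · congr 2
    refine Finset.sum_congr rfl fun i _ => Finset.sum_congr rfl fun j _ => ?_
    simp; ring

lemma slep_step {n : ℕ} {F : (Fin n → ℝ) → ℝ} (hF : SlepJet F) {μ ν : Measure (Fin n → ℝ)}
    (hμ : SlepGauss μ) (hν : SlepGauss ν)
    (hvar : ∀ i, ∫ x, x i * x i ∂μ = ∫ x, x i * x i ∂ν)
    (hcov : ∀ i j, ∫ x, x i * x j ∂μ ≤ ∫ x, x i * x j ∂ν) :
    ∃ K : ℝ, ∀ ε : ℝ, 0 ≤ ε → ∀ s,
      ∫ x, F (s + ε • x) ∂μ ≤ ∫ x, F (s + ε • x) ∂ν + K * ε ^ 3 := by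
  obtain ⟨L, Q, K, hK, Q0, hT⟩ := slep_jet_global hF
  refine ⟨K * ∫ x, ‖x‖ ^ 3 ∂μ + K * ∫ x, ‖x‖ ^ 3 ∂ν, fun ε hε s => ?_⟩
  have h1 := slep_expand hF hμ (hT s) hε
  have h2 := slep_expand hF hν (hT s) hε
  have h3 : ∑ i, ∑ j, Q s i j * ∫ x, x i * x j ∂μ ≤ ∑ i, ∑ j, Q s i j * ∫ x, x i * x j ∂ν := by
    refine Finset.sum_le_sum fun i _ => Finset.sum_le_sum fun j _ => ?_
    by_cases hij : i = j
    · subst hij; rw [hvar i]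
    · exact mul_le_mul_of_nonneg_left (hcov i j) (Q0 s i j hij)
  have h4 := mul_le_mul_of_nonneg_left h3 (by positivity : 0 ≤ 1 / 2 * ε ^ 2)
  rw [abs_le] at h1 h2
  linarith [h1.2, h2.1]

lemma slep_charFun {n : ℕ} {μ : Measure (Fin n → ℝ)} (hμ : SlepGauss μ)
    (L : StrongDual ℝ (Fin n → ℝ)) : ∃ v : ℝ, ∀ c : ℝ,
      charFunDual (μ.map (fun x => c • x)) L = Complex.exp (-(v * c ^ 2 / 2 : ℝ)) := by
  obtain ⟨v, hv⟩ := hμ.2 L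
  refine ⟨v, fun c => ?_⟩
  have : (fun x : Fin n → ℝ => c • x) = ⇑(c • ContinuousLinearMap.id ℝ (Fin n → ℝ)) := by
    ext; simp
  rw [this, charFunDual_map]
  have : L.comp (c • ContinuousLinearMap.id ℝ (Fin n → ℝ)) = c • L := by
    ext; simp
  rw [this, ← charFun_map_eq_charFunDual_smul, hv, charFun_gaussianReal]
  congr 1
  push_cast
  ring

lemma slep_stable {n : ℕ} {μ : Measure (Fin n → ℝ)} (hμ : SlepGauss μ) {a b c : ℝ}
    (h : a ^ 2 + b ^ 2 = c ^ 2) :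
    (μ.map (fun x => a • x)) ∗ (μ.map (fun x => b • x)) = μ.map (fun x => c • x) := by
  have := hμ.1
  refine Measure.ext_of_charFunDual (funext fun L => ?_)
  obtain ⟨v, hv⟩ := slep_charFun hμ L
  rw [charFunDual_conv, hv, hv, hv, ← Complex.exp_add]
  congr 1
  rw [← h]
  push_cast
  ring

lemma slep_conv_step {n : ℕ} {F : (Fin n → ℝ) → ℝ} (hF : SlepJet F) {γ μ ν : Measure (Fin n → ℝ)}
    [IsProbabilityMeasure γ] [IsProbabilityMeasure μ] [IsProbabilityMeasure ν] {ε δ : ℝ}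
    (h : ∀ s, ∫ x, F (s + ε • x) ∂μ ≤ ∫ x, F (s + ε • x) ∂ν + δ) :
    ∫ x, F x ∂(γ ∗ (μ.map (fun x => ε • x))) ≤ ∫ x, F x ∂(γ ∗ (ν.map (fun x => ε • x))) + δ := by
  have key : ∀ μ : Measure (Fin n → ℝ), IsProbabilityMeasure μ →
      ∫ x, F x ∂(γ ∗ (μ.map (fun x => ε • x))) = ∫ s, ∫ x, F (s + ε • x) ∂μ ∂γ ∧
      Integrable (fun s => ∫ x, F (s + ε • x) ∂μ) γ := by
    intro μ hμ
    have hm : Measurable (fun x : Fin n → ℝ => ε • x) := by fun_prop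
    constructor
    · rw [integral_conv (f := F) (slep_bdd_int hF _ measurable_id)]
      refine integral_congr_ae (Filter.Eventually.of_forall fun s => ?_)
      dsimp only
      rw [integral_map hm.aemeasurable]
      exact (hF.1.comp (measurable_const_add s)).aestronglyMeasurable
    · have : Integrable (fun p : (Fin n → ℝ) × (Fin n → ℝ) => F (p.1 + ε • p.2)) (γ.prod μ) :=
        slep_bdd_int hF _ (by fun_prop)
      exact this.integral_prod_left
  obtain ⟨k1, i1⟩ := key μ inferInstance
  obtain ⟨k2, i2⟩ := key ν inferInstance
  rw [k1, k2]
  calc _ ≤ ∫ s, (∫ x, F (s + ε • x) ∂ν + δ) ∂γ :=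
        integral_mono i1 (i2.add (integrable_const _)) h
    _ = _ := by rw [integral_add i2 (integrable_const _)]; simp

lemma slep_smooth {n : ℕ} {F : (Fin n → ℝ) → ℝ} (hF : SlepJet F) {μ ν : Measure (Fin n → ℝ)}
    (hμ : SlepGauss μ) (hν : SlepGauss ν)
    (hvar : ∀ i, ∫ x, x i * x i ∂μ = ∫ x, x i * x i ∂ν)
    (hcov : ∀ i j, ∫ x, x i * x j ∂μ ≤ ∫ x, x i * x j ∂ν) :
    ∫ x, F x ∂μ ≤ ∫ x, F x ∂ν := by
  have := hμ.1
  have := hν.1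
  obtain ⟨K, hK⟩ := slep_step hF hμ hν hvar hcov
  have main : ∀ N : ℕ, 0 < N → ∫ x, F x ∂μ ≤ ∫ x, F x ∂ν + K * √(1 / N) := by
    intro N hN
    have hNr : (0:ℝ) < N := by exact_mod_cast hN
    have hsc : ∀ (ρ : Measure (Fin n → ℝ)) [IsProbabilityMeasure ρ] (c : ℝ),
        IsProbabilityMeasure (ρ.map (fun x => c • x)) := fun ρ _ c =>
      Measure.isProbabilityMeasure_map (by fun_prop)
    let m : ℕ → Measure (Fin n → ℝ) := fun k =>
      (μ.map (fun x => √((N - k : ℝ) / N) • x)) ∗ (ν.map (fun x => √((k : ℝ) / N) • x))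
    have hstep : ∀ k, k + 1 ≤ N → ∫ x, F x ∂(m k) ≤ ∫ x, F x ∂(m (k + 1)) + K * √(1 / N) ^ 3 := by
      intro k hk
      have hkr : (k : ℝ) + 1 ≤ N := by exact_mod_cast hk
      have hd : (0:ℝ) ≤ (N - (k + 1 : ℕ) : ℝ) / N := by
        apply div_nonneg _ hNr.le; push_cast; linarith
      have hd' : (0:ℝ) ≤ (N - k : ℝ) / N := by
        apply div_nonneg _ hNr.le; linarith
      let A := μ.map (fun x => √((N - (k + 1 : ℕ) : ℝ) / N) • x)
      let B := ν.map (fun x => √((k : ℝ) / N) • x)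
      let U := μ.map (fun x => √(1 / N : ℝ) • x)
      let V := ν.map (fun x => √(1 / N : ℝ) • x)
      have : IsProbabilityMeasure A := hsc _ _
      have : IsProbabilityMeasure B := hsc _ _
      have : IsProbabilityMeasure U := hsc _ _
      have : IsProbabilityMeasure V := hsc _ _
      have e1 : m k = (A ∗ B) ∗ U := by
        have : A ∗ U = μ.map (fun x => √((N - k : ℝ) / N) • x) := by
          refine slep_stable hμ ?_
          rw [Real.sq_sqrt hd, Real.sq_sqrt hd', Real.sq_sqrt (by positivity)]
          push_cast; field_simp; ring
        rw [Measure.conv_assoc, Measure.conv_comm B U, ← Measure.conv_assoc, this]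
      have e2 : m (k + 1) = (A ∗ B) ∗ V := by
        have : B ∗ V = ν.map (fun x => √(((k + 1 : ℕ) : ℝ) / N) • x) := by
          refine slep_stable hν ?_
          rw [Real.sq_sqrt (by positivity), Real.sq_sqrt (by positivity), Real.sq_sqrt (by positivity)]
          push_cast; field_simp
        rw [Measure.conv_assoc, this]
      rw [e1, e2]
      exact slep_conv_step hF (hK _ (Real.sqrt_nonneg _))
    have hind : ∀ k ≤ N, ∫ x, F x ∂(m 0) ≤ ∫ x, F x ∂(m k) + k * (K * √(1 / N) ^ 3) := by
      intro k
      induction k with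
      | zero => intro _; simp
      | succ k ih =>
        intro hk
        have := ih (by omega)
        have := hstep k hk
        push_cast
        linarith
    have hz : ∀ (ρ : Measure (Fin n → ℝ)) [IsProbabilityMeasure ρ],
        ρ.map (fun x => (0:ℝ) • x) = Measure.dirac 0 := by
      intro ρ _; simp
    have m0 : m 0 = μ := by
      have h1 : ((N : ℝ) - (0 : ℕ)) / N = 1 := by simp [hNr.ne']
      have h2 : ((0 : ℕ) : ℝ) / N = 0 := by simp
      simp only [m]
      rw [h1, h2, Real.sqrt_one, Real.sqrt_zero, hz]
      simp
    have mN : m N = ν := by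
      have h1 : ((N : ℝ)) / N = 1 := by simp [hNr.ne']
      have h2 : ((N : ℝ) - N) / N = 0 := by simp
      simp only [m]
      rw [h1, h2, Real.sqrt_one, Real.sqrt_zero, hz]
      simp
    have := hind N le_rfl
    rw [m0, mN] at this
    refine this.trans (le_of_eq ?_)
    have : √(1 / N : ℝ) ^ 3 = (1 / N) * √(1 / N : ℝ) := by
      rw [pow_succ, Real.sq_sqrt (by positivity)]
    rw [this]; field_simp
  have lim : Filter.Tendsto (fun N : ℕ => ∫ x, F x ∂ν + K * √(1 / N)) Filter.atTop
      (nhds (∫ x, F x ∂ν + K * √0)) := by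
    refine tendsto_const_nhds.add (Filter.Tendsto.const_mul _ ?_)
    exact (Real.continuous_sqrt.tendsto 0).comp tendsto_one_div_atTop_nhds_zero_nat
  have := ge_of_tendsto lim (Filter.eventually_atTop.2 ⟨1, fun N hN => main N hN⟩)
  simpa using this

lemma slep_approx_lim (y t : ℝ) : Filter.Tendsto
    (fun k : ℕ => 1 - Real.smoothTransition ((k + 1) * (y - t))) Filter.atTop
    (nhds (if y ≤ t then 1 else 0)) := by
  split_ifs with h
  · refine tendsto_const_nhds.congr fun k => ?_
    rw [Real.smoothTransition.zero_of_nonpos, sub_zero]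
    exact mul_nonpos_of_nonneg_of_nonpos (by positivity) (by linarith)
  · push Not at h
    obtain ⟨N, hN⟩ := exists_nat_gt (1 / (y - t))
    refine tendsto_const_nhds.congr' ?_
    filter_upwards [Filter.eventually_ge_atTop N] with k hk
    rw [Real.smoothTransition.one_of_one_le, sub_self]
    have hp : 0 < y - t := by linarith
    rw [div_lt_iff₀ hp] at hN
    have : (N : ℝ) ≤ k := by exact_mod_cast hk
    nlinarith

lemma slep_orthant {n : ℕ} {μ ν : Measure (Fin n → ℝ)}
    (hμ : SlepGauss μ) (hν : SlepGauss ν)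
    (hvar : ∀ i, ∫ x, x i * x i ∂μ = ∫ x, x i * x i ∂ν)
    (hcov : ∀ i j, ∫ x, x i * x j ∂μ ≤ ∫ x, x i * x j ∂ν) (t : Fin n → ℝ) :
    μ {x | ∀ i, x i ≤ t i} ≤ ν {x | ∀ i, x i ≤ t i} := by
  have := hμ.1
  have := hν.1
  have hS : MeasurableSet {x : Fin n → ℝ | ∀ i, x i ≤ t i} := by
    have : {x : Fin n → ℝ | ∀ i, x i ≤ t i} = Set.Iic t := by ext x; simp [Pi.le_def]
    rw [this]; exact measurableSet_Iic
  let G : ℕ → (Fin n → ℝ) → ℝ := fun k x =>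
    ∏ i, (1 - Real.smoothTransition ((k + 1) * (x i - t i)))
  have hG : ∀ k, SlepJet (G k) := fun k => slep_jet_prod (fun i => slep_jet_trans i (t i) k) _
  have hlim : ∀ x, Filter.Tendsto (fun k => G k x) Filter.atTop
      (nhds ({x : Fin n → ℝ | ∀ i, x i ≤ t i}.indicator 1 x)) := by
    intro x
    have h := tendsto_finsetProd (Finset.univ : Finset (Fin n))
      (fun i _ => slep_approx_lim (x i) (t i))
    convert h using 2
    by_cases hx : ∀ i, x i ≤ t i
    · simp [hx]
    · have : ∃ i, ¬ x i ≤ t i := by push Not at hx ⊢; exact hx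
      obtain ⟨i, hi⟩ := this
      rw [Finset.prod_eq_zero (Finset.mem_univ i) (by simp [hi])]
      exact Set.indicator_of_notMem (s := {x : Fin n → ℝ | ∀ i, x i ≤ t i}) hx _
  have conv : ∀ ρ : Measure (Fin n → ℝ), IsProbabilityMeasure ρ →
      Filter.Tendsto (fun k => ∫ x, G k x ∂ρ) Filter.atTop
        (nhds (ρ.real {x | ∀ i, x i ≤ t i})) := by
    intro ρ _
    rw [← integral_indicator_one hS]
    refine tendsto_integral_of_dominated_convergence (fun _ => 1)
      (fun k => (hG k).1.aestronglyMeasurable) (integrable_const _) (fun k => ?_) ?_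
    · refine Filter.Eventually.of_forall fun x => ?_
      rw [Real.norm_eq_abs, abs_of_nonneg ((hG k).2.1 x)]
      exact (hG k).2.2.1 x
    · exact Filter.Eventually.of_forall hlim
  have := le_of_tendsto_of_tendsto' (conv μ inferInstance) (conv ν inferInstance)
    (fun k => slep_smooth (hG k) hμ hν hvar hcov)
  rw [Measure.real, Measure.real] at this
  exact (ENNReal.toReal_le_toReal (measure_ne_top _ _) (measure_ne_top _ _)).1 this

lemma slep_law {Ω : Type*} [MeasurableSpace Ω] (P : Measure Ω)
    [IsProbabilityMeasure P] {n : ℕ} {X : Fin n → Ω → ℝ}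
    (hXm : ∀ i, Measurable (X i)) (hX : IsCenteredGaussianVec P X) :
    SlepGauss (P.map (fun ω i => X i ω)) := by
  have hm : Measurable (fun ω i => X i ω) := measurable_pi_lambda _ hXm
  refine ⟨Measure.isProbabilityMeasure_map hm.aemeasurable, fun L => ?_⟩
  rw [Measure.map_map (by fun_prop) hm]
  have : (L ∘ fun ω i => X i ω) = fun ω => ∑ i, L (Pi.single i 1) * X i ω := by
    ext ω
    simp only [Function.comp]
    have hL := (L : (Fin n → ℝ) →ₗ[ℝ] ℝ).pi_apply_eq_sum_univ (fun i => X i ω)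
    simp only [ContinuousLinearMap.coe_coe] at hL
    rw [hL]
    refine Finset.sum_congr rfl fun i _ => ?_
    rw [smul_eq_mul, mul_comm]
    congr 2
    ext j
    simp [Pi.single_apply, eq_comm]
  rw [this]
  exact ⟨_, hX _⟩

/-- Slepian's lemma: if `X`, `Y` are centered Gaussian vectors with equal variances and
`Cov(X_i,X_j) ≤ Cov(Y_i,Y_j)` for all `i, j`, then for every `t_1,…,t_n`,
`P(∀ i, X_i ≤ t_i) ≤ P(∀ i, Y_i ≤ t_i)`; in particular
`P(max_i X_i ≤ t) ≤ P(max_i Y_i ≤ t)` for all `t`. -/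
theorem slepian_lemma {Ω : Type*} [MeasurableSpace Ω] (P : Measure Ω)
    [IsProbabilityMeasure P] (n : ℕ) (X Y : Fin n → Ω → ℝ)
    (hXm : ∀ i, Measurable (X i)) (hYm : ∀ i, Measurable (Y i))
    (hX : IsCenteredGaussianVec P X) (hY : IsCenteredGaussianVec P Y)
    (hvar : ∀ i, ∫ ω, (X i ω) ^ 2 ∂P = ∫ ω, (Y i ω) ^ 2 ∂P)
    (hcov : ∀ i j, ∫ ω, X i ω * X j ω ∂P ≤ ∫ ω, Y i ω * Y j ω ∂P) :
    (∀ t : Fin n → ℝ, P {ω | ∀ i, X i ω ≤ t i} ≤ P {ω | ∀ i, Y i ω ≤ t i}) ∧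
    (∀ t : ℝ, P {ω | ∀ i, X i ω ≤ t} ≤ P {ω | ∀ i, Y i ω ≤ t}) := by
  have main : ∀ t : Fin n → ℝ, P {ω | ∀ i, X i ω ≤ t i} ≤ P {ω | ∀ i, Y i ω ≤ t i} := by
    intro t
    have hmX : Measurable (fun ω i => X i ω) := measurable_pi_lambda _ hXm
    have hmY : Measurable (fun ω i => Y i ω) := measurable_pi_lambda _ hYm
    have hS : MeasurableSet {x : Fin n → ℝ | ∀ i, x i ≤ t i} := by
      have : {x : Fin n → ℝ | ∀ i, x i ≤ t i} = Set.Iic t := by ext x; simp [Pi.le_def]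
      rw [this]; exact measurableSet_Iic
    have key : ∀ Z : Fin n → Ω → ℝ, (∀ i, Measurable (Z i)) → ∀ i j,
        ∫ x, x i * x j ∂(P.map (fun ω i => Z i ω)) = ∫ ω, Z i ω * Z j ω ∂P := by
      intro Z hZ i j
      rw [integral_map (measurable_pi_lambda _ hZ).aemeasurable (by fun_prop)]
    have h := slep_orthant (slep_law P hXm hX) (slep_law P hYm hY)
      (fun i => by
        rw [key X hXm, key Y hYm]
        simpa only [sq] using hvar i)
      (fun i j => by
        rw [key X hXm, key Y hYm]
        exact hcov i j) t
    rw [Measure.map_apply hmX hS, Measure.map_apply hmY hS] at h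
    exact h
  exact ⟨main, fun t => main fun _ => t⟩
end
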